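/- Let k be a positive integer and Z₁, Z₂ ≥ 2 real numbers with Z₁Z₂ > k^{19/10}. Then the number of quadruples (a,b,c,d) of positive integers with Z₁ ≤ ab < 2Z₁, Z₂ ≤ cd < 2Z₂, gcd(abcd, k) = 1, ac ≡ ±bd (mod k), and ac ≠ bd is O((Z₁Z₂/k)·(log Z₁Z₂)^3), with an absolute implied constant. -/

import Mathlib

/-!
Write `τ(m)` for the number of divisors of `m`. Fixing two of the four variables, or one of them and
the quotient of the congruence by `k`, confines the product of two others to an arithmetic
progression, so the number of quadruples is at most a sum of `τ` over progressions.

Over a progression of `J` integers `m ≤ J ^ A` that are coprime to its difference, the sum of `τ(m)`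
is `O(J log J)`. Let `g` be the product of as many prime factors of `m`, taken in increasing order,
as keep it at most `J`. If `g < m` and `p` is the next prime, then `J < g * p` and
`τ(m / g) ≪ J ^ (A / log p)`. Either `J ≤ p ^ 2` and this is bounded, or `J < g ^ 2`, and then half
of the divisors `e` of `g` satisfy `g ≤ e ^ 2`, hence `J ≤ e ^ 4`. Both ways `τ(m)` is at most a
constant times the sum of `e ^ (4 * A / log P(e))` over the divisors `e ≤ J` of `m`, where `P(e)` is
the largest prime factor of `e`, or a large constant if that is bigger. Summing over the progression
leaves smooth sums `∑ e ^ (α - 1)`, which for `α ≪ 1 / log p` are `O(log p)`: this is clear for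
`α = -1 / log p`, and the logarithmic derivative in `α` is `O(log p)`, so Grönwall's inequality
applies.

Let `X = Z₁Z₂ ≥ k ^ θ` with `θ > 1`, let `η > 0` be small, and suppose `bd < ac`, as one may by
symmetry. If `b` and `d` are less than `X ^ η`, fix `(b, d)`: then `ac ≪ X / (bd)` lies in one of
two classes modulo `k`, and `X / (bdk) ≥ X ^ η`. If `X ^ η ≤ d`, write `ac = k * l ± b * d` and fix
`(l, b)`: then `ac` lies in the class of `k * l` modulo `b`, in an interval around `k * l` with
`≪ X / (k * l * b)` terms of that class, a number exceeding a constant times `d`. Common factors of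
`l` and `b` cost `τ(gcd(l, b))`, which is bounded on average. The case `X ^ η ≤ b` is symmetric.
-/

section

open Finset

theorem sum_log_primeFactors_le (n : ℕ) : ∑ p ∈ n.primeFactors, Real.log p ≤ Real.log n := by
  rcases eq_or_ne n 0 with rfl | hn
  · simp
  rw [Real.log_nat_eq_sum_factorization, Finsupp.sum, Nat.support_factorization]
  refine sum_le_sum fun p hp => ?_
  have hlog : 0 ≤ Real.log p := Real.log_natCast_nonneg p
  have hv : (1 : ℝ) ≤ n.factorization p := by
    exact_mod_cast (Nat.prime_of_mem_primeFactors hp).factorization_pos_of_dvd hn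
      (Nat.dvd_of_mem_primeFactors hp)
  nlinarith

theorem sum_log_mul_div_primesLE_le (n : ℕ) :
    ∑ p ∈ Nat.primesLE n, Real.log p * (n / p : ℕ) ≤ n * Real.log n := by
  calc ∑ p ∈ Nat.primesLE n, Real.log p * (n / p : ℕ)
      = ∑ p ∈ Nat.primesLE n, ∑ m ∈ Ioc 0 n with p ∣ m, Real.log p := by
        refine sum_congr rfl fun p _ => ?_
        rw [sum_const, Nat.Ioc_filter_dvd_card_eq_div, nsmul_eq_mul, mul_comm]
    _ = ∑ m ∈ Ioc 0 n, ∑ p ∈ m.primeFactors, Real.log p := by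
        refine sum_comm' fun p m => ?_
        simp only [Nat.mem_primesLE, mem_filter, mem_Ioc, Nat.mem_primeFactors]
        constructor
        · rintro ⟨⟨-, hp⟩, hm, hpm⟩
          exact ⟨⟨hp, hpm, hm.1.ne'⟩, hm⟩
        · rintro ⟨⟨hp, hpm, -⟩, hm⟩
          exact ⟨⟨(Nat.le_of_dvd hm.1 hpm).trans hm.2, hp⟩, hm, hpm⟩
    _ ≤ ∑ _m ∈ Ioc 0 n, Real.log n := by
        refine sum_le_sum fun m hm => (sum_log_primeFactors_le m).trans ?_
        have hm' := mem_Ioc.1 hm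
        exact Real.log_le_log (by exact_mod_cast hm'.1) (by exact_mod_cast hm'.2)
    _ = n * Real.log n := by simp

theorem natCast_div_le_two_mul_nat_div {n p : ℕ} (hp : 0 < p) (hpn : p ≤ n) :
    (n : ℝ) / p ≤ 2 * (n / p : ℕ) := by
  have hfloor : (n : ℝ) / p < (n / p : ℕ) + 1 := by
    rw [← Nat.floor_div_eq_div (K := ℝ)]
    exact Nat.lt_floor_add_one _
  have hone : (1 : ℝ) ≤ (n / p : ℕ) := by exact_mod_cast Nat.div_pos hpn hp
  linarith

theorem sum_log_div_primesLE_le (n : ℕ) :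
    ∑ p ∈ Nat.primesLE n, Real.log p / p ≤ 2 * Real.log n := by
  rcases Nat.eq_zero_or_pos n with rfl | hn
  · simp
  have hn' : (0 : ℝ) < n := by exact_mod_cast hn
  refine le_of_mul_le_mul_left ?_ hn'
  calc n * ∑ p ∈ Nat.primesLE n, Real.log p / p
      = ∑ p ∈ Nat.primesLE n, Real.log p * (n / p) := by
        rw [mul_sum]
        exact sum_congr rfl fun p _ => by ring
    _ ≤ ∑ p ∈ Nat.primesLE n, 2 * (Real.log p * (n / p : ℕ)) := by
        refine sum_le_sum fun p hp => ?_
        have hdiv := natCast_div_le_two_mul_nat_div (Nat.prime_of_mem_primesLE hp).pos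
          (Nat.le_of_mem_primesLE hp)
        rw [mul_left_comm]
        exact mul_le_mul_of_nonneg_left hdiv (Real.log_natCast_nonneg p)
    _ ≤ 2 * (n * Real.log n) := by
        rw [← mul_sum]
        gcongr
        exact sum_log_mul_div_primesLE_le n
    _ = n * (2 * Real.log n) := by ring

theorem mul_rpow_neg_one_sub_le_sub {s : ℝ} (hs : 0 < s) {n : ℕ} (hn : 0 < n) :
    s * ((n + 1 : ℕ) : ℝ) ^ (-1 - s) ≤ (n : ℝ) ^ (-s) - ((n + 1 : ℕ) : ℝ) ^ (-s) := by
  have hn0 : (0 : ℝ) < n := by exact_mod_cast hn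
  set x : ℝ := ((n + 1 : ℕ) : ℝ) with hx
  have hx0 : 0 < x := by positivity
  have hnx : (n : ℝ) = x * (1 - 1 / x) := by
    rw [hx]; push_cast; field_simp; ring
  have hbase : 0 < 1 - 1 / x := by
    by_contra! h
    nlinarith
  have hlog : Real.log (1 - 1 / x) ≤ -(1 / x) := by
    linarith [Real.log_le_sub_one_of_pos hbase]
  have hexp : 1 + s / x ≤ (1 - 1 / x) ^ (-s) := by
    rw [Real.rpow_def_of_pos hbase]
    have := Real.add_one_le_exp (Real.log (1 - 1 / x) * -s)
    have h2 : s / x ≤ Real.log (1 - 1 / x) * -s := by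
      calc s / x = -(1/x) * -s := by ring
        _ ≤ _ := mul_le_mul_of_nonpos_right hlog (by linarith)
    linarith
  rw [hnx, Real.mul_rpow hx0.le hbase.le, sub_eq_add_neg, Real.rpow_add hx0, Real.rpow_neg_one]
  have := mul_le_mul_of_nonneg_left hexp (Real.rpow_nonneg hx0.le (-s))
  calc _ = x ^ (-s) * (1 + s / x) - x ^ (-s) := by ring
    _ ≤ _ := by linarith

theorem sum_rpow_neg_one_sub_le {s : ℝ} (hs : 0 < s) (n : ℕ) :
    ∑ m ∈ Icc 1 n, (m : ℝ) ^ (-1 - s) ≤ 1 + 1 / s := by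
  suffices h : ∑ m ∈ Icc 1 (n + 1), (m : ℝ) ^ (-1 - s) ≤
      1 + (1 - ((n + 1 : ℕ) : ℝ) ^ (-s)) / s by
    calc ∑ m ∈ Icc 1 n, (m : ℝ) ^ (-1 - s)
        ≤ ∑ m ∈ Icc 1 (n + 1), (m : ℝ) ^ (-1 - s) :=
          sum_le_sum_of_subset_of_nonneg (Icc_subset_Icc_right n.le_succ)
            fun _ _ _ => by positivity
      _ ≤ 1 + (1 - ((n + 1 : ℕ) : ℝ) ^ (-s)) / s := h
      _ ≤ 1 + 1 / s := by
          gcongr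
          linarith [Real.rpow_nonneg (n + 1 : ℕ).cast_nonneg (-s : ℝ)]
  induction n with
  | zero => simp
  | succ n ih =>
    rw [sum_Icc_succ_top (by omega)]
    have hstep := (le_div_iff₀' hs).2 (mul_rpow_neg_one_sub_le_sub hs n.succ_pos)
    calc _ ≤ _ := add_le_add ih hstep
      _ = _ := by push_cast; ring

/-- The sum `∑ e ^ (α - 1)` over those `e ≤ N` all of whose prime factors are at most `p`. It is
the Dirichlet polynomial to which Rankin's trick is applied. -/
noncomputable def rankinSum (N p : ℕ) (α : ℝ) : ℝ :=
  ∑ e ∈ Nat.smoothNumbersUpTo N (p + 1), (e : ℝ) ^ (α - 1)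

theorem mem_smoothNumbersUpTo_of_mul_mem {N k m n : ℕ} (hm : 0 < m)
    (h : m * n ∈ Nat.smoothNumbersUpTo N k) : n ∈ Nat.smoothNumbersUpTo N k := by
  rw [Nat.mem_smoothNumbersUpTo] at h ⊢
  exact ⟨(Nat.le_mul_of_pos_left n hm).trans h.1,
    Nat.mem_smoothNumbers_of_dvd h.2 (dvd_mul_left n m)⟩

theorem ne_zero_of_mem_smoothNumbersUpTo {N k n : ℕ} (h : n ∈ Nat.smoothNumbersUpTo N k) :
    n ≠ 0 :=
  Nat.ne_zero_of_mem_smoothNumbers (Nat.mem_smoothNumbersUpTo.1 h).2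

theorem rankinSum_nonneg (N p : ℕ) (α : ℝ) : 0 ≤ rankinSum N p α :=
  sum_nonneg fun _ _ => by positivity

theorem prime_rpow_sub_one_le {r : ℕ} (hr : r.Prime) {α : ℝ} (hα : α ≤ 1 / 4) :
    (r : ℝ) ^ (α - 1) ≤ 3 / 5 := by
  have hr2 : (2 : ℝ) ≤ r := by exact_mod_cast hr.two_le
  calc (r : ℝ) ^ (α - 1) ≤ (r : ℝ) ^ (-(3 / 4) : ℝ) :=
        Real.rpow_le_rpow_of_exponent_le (by linarith) (by linarith)
    _ ≤ 2 ^ (-(3 / 4) : ℝ) := Real.rpow_le_rpow_of_nonpos two_pos hr2 (by norm_num)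
    _ ≤ 3 / 5 := by
        refine le_of_pow_le_pow_left₀ four_ne_zero (by norm_num) ?_
        rw [← Real.rpow_natCast, ← Real.rpow_mul two_pos.le,
          show (-(3 / 4) * (4 : ℕ) : ℝ) = (-3 : ℤ) by norm_num, Real.rpow_intCast]
        norm_num

theorem sum_factorization_mul_rpow_le_add {r : ℕ} (hr : r.Prime) (N p : ℕ) (α : ℝ) :
    ∑ e ∈ Nat.smoothNumbersUpTo N (p + 1), e.factorization r * (e : ℝ) ^ (α - 1) ≤
      (r : ℝ) ^ (α - 1) * (rankinSum N p α +
        ∑ e ∈ Nat.smoothNumbersUpTo N (p + 1), e.factorization r * (e : ℝ) ^ (α - 1)) := by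
  set S := Nat.smoothNumbersUpTo N (p + 1)
  calc ∑ e ∈ S, e.factorization r * (e : ℝ) ^ (α - 1)
      = ∑ e ∈ S with r ∣ e, e.factorization r * (e : ℝ) ^ (α - 1) := by
        refine (sum_filter_of_ne fun e _ he => ?_).symm
        by_contra hre
        simp [Nat.factorization_eq_zero_of_not_dvd hre] at he
    _ ≤ ∑ e ∈ S.image (r * ·), e.factorization r * (e : ℝ) ^ (α - 1) := by
        refine sum_le_sum_of_subset_of_nonneg (fun e he => ?_) fun _ _ _ => by positivity
        obtain ⟨heS, f, rfl⟩ := mem_filter.1 he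
        exact mem_image_of_mem _ (mem_smoothNumbersUpTo_of_mul_mem hr.pos heS)
    _ = ∑ f ∈ S, (r * f).factorization r * ((r * f : ℕ) : ℝ) ^ (α - 1) :=
        sum_image fun a _ b _ h => Nat.eq_of_mul_eq_mul_left hr.pos h
    _ = ∑ f ∈ S, (r : ℝ) ^ (α - 1) * ((f : ℝ) ^ (α - 1) +
          f.factorization r * (f : ℝ) ^ (α - 1)) := by
        refine sum_congr rfl fun f hf => ?_
        rw [Nat.factorization_mul hr.ne_zero (ne_zero_of_mem_smoothNumbersUpTo hf), Nat.cast_mul,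
          Real.mul_rpow r.cast_nonneg f.cast_nonneg, Finsupp.add_apply, hr.factorization_self]
        push_cast
        ring
    _ = _ := by rw [← mul_sum, sum_add_distrib, rankinSum]

theorem sum_factorization_mul_rpow_le {r : ℕ} (hr : r.Prime) (N p : ℕ) {α : ℝ} (hα : α ≤ 1 / 4) :
    ∑ e ∈ Nat.smoothNumbersUpTo N (p + 1), e.factorization r * (e : ℝ) ^ (α - 1) ≤
      5 / 2 * (r : ℝ) ^ (α - 1) * rankinSum N p α := by
  have hself := sum_factorization_mul_rpow_le_add hr N p α
  set A := ∑ e ∈ Nat.smoothNumbersUpTo N (p + 1), e.factorization r * (e : ℝ) ^ (α - 1)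
  have hA : 0 ≤ A := sum_nonneg fun _ _ => by positivity
  have hsmall := mul_le_mul_of_nonneg_right (prime_rpow_sub_one_le hr hα) hA
  linarith

theorem log_eq_sum_primesLE_of_mem_smoothNumbersUpTo {N p e : ℕ}
    (he : e ∈ Nat.smoothNumbersUpTo N (p + 1)) :
    Real.log e = ∑ r ∈ Nat.primesLE p, e.factorization r * Real.log r := by
  rw [Real.log_nat_eq_sum_factorization]
  refine Finsupp.sum_of_support_subset _ ?_ _ fun _ _ => by simp
  exact Nat.primeFactors_subset_of_mem_smoothNumbers (Nat.mem_smoothNumbersUpTo.1 he).2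

theorem hasDerivAt_rankinSum (N p : ℕ) (α : ℝ) :
    HasDerivAt (rankinSum N p)
      (∑ e ∈ Nat.smoothNumbersUpTo N (p + 1), Real.log e * (e : ℝ) ^ (α - 1)) α := by
  refine HasDerivAt.fun_sum fun e he => ?_
  have he0 : (0 : ℝ) < e := by
    exact_mod_cast Nat.pos_of_ne_zero (ne_zero_of_mem_smoothNumbersUpTo he)
  simpa using ((hasDerivAt_id α).sub_const 1).const_rpow he0

theorem sum_log_mul_rpow_le {N p : ℕ} {c α : ℝ} (hc : 0 ≤ c) (hα : α ≤ 1 / 4)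
    (hαc : α * Real.log p ≤ c) :
    ∑ e ∈ Nat.smoothNumbersUpTo N (p + 1), Real.log e * (e : ℝ) ^ (α - 1) ≤
      5 * Real.exp c * Real.log p * rankinSum N p α := by
  calc ∑ e ∈ Nat.smoothNumbersUpTo N (p + 1), Real.log e * (e : ℝ) ^ (α - 1)
      = ∑ r ∈ Nat.primesLE p, Real.log r *
          ∑ e ∈ Nat.smoothNumbersUpTo N (p + 1), e.factorization r * (e : ℝ) ^ (α - 1) := by
        simp only [mul_sum]
        rw [sum_comm]
        refine sum_congr rfl fun e he => ?_
        rw [log_eq_sum_primesLE_of_mem_smoothNumbersUpTo he, sum_mul]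
        exact sum_congr rfl fun r _ => by ring
    _ ≤ ∑ r ∈ Nat.primesLE p, Real.log r *
          (5 / 2 * (Real.exp c / r) * rankinSum N p α) := by
        refine sum_le_sum fun r hr => ?_
        have hr0 : (0 : ℝ) < r := by exact_mod_cast (Nat.prime_of_mem_primesLE hr).pos
        have hlogr : 0 ≤ Real.log r := Real.log_natCast_nonneg r
        have hlog : Real.log r ≤ Real.log p :=
          Real.log_le_log hr0 (by exact_mod_cast Nat.le_of_mem_primesLE hr)
        have hexp : Real.log r * α ≤ c := by
          rcases le_total α 0 with h | h <;> nlinarith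
        have hpow : (r : ℝ) ^ (α - 1) ≤ Real.exp c / r := by
          rw [Real.rpow_sub_one hr0.ne', Real.rpow_def_of_pos hr0]
          gcongr
        refine mul_le_mul_of_nonneg_left ?_ hlogr
        refine (sum_factorization_mul_rpow_le (Nat.prime_of_mem_primesLE hr) N p hα).trans ?_
        have := rankinSum_nonneg N p α
        gcongr
    _ = 5 / 2 * Real.exp c * rankinSum N p α * ∑ r ∈ Nat.primesLE p, Real.log r / r := by
        rw [mul_sum]
        exact sum_congr rfl fun r _ => by ring
    _ ≤ 5 / 2 * Real.exp c * rankinSum N p α * (2 * Real.log p) := by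
        have := rankinSum_nonneg N p α
        gcongr
        exact sum_log_div_primesLE_le p
    _ = _ := by ring

theorem rankinSum_le_mul_exp {N p : ℕ} {a c α : ℝ} (hc : 0 ≤ c) (haα : a ≤ α) (hα : α ≤ 1 / 4)
    (hαc : α * Real.log p ≤ c) :
    rankinSum N p α ≤ rankinSum N p a * Real.exp (5 * Real.exp c * Real.log p * (α - a)) := by
  have hlog : 0 ≤ Real.log p := Real.log_natCast_nonneg p
  have hgron := le_gronwallBound_of_liminf_deriv_right_le (δ := rankinSum N p a)
    (K := 5 * Real.exp c * Real.log p) (ε := 0) (a := a) (b := α)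
    (fun β _ => (hasDerivAt_rankinSum N p β).continuousAt.continuousWithinAt)
    (fun β _ _ hr => (hasDerivAt_rankinSum N p β).hasDerivWithinAt.liminf_right_slope_le hr)
    le_rfl (fun β hβ => ?_) α (Set.right_mem_Icc.2 haα)
  · rwa [gronwallBound_ε0] at hgron
  · have hβc : β * Real.log p ≤ c := (mul_le_mul_of_nonneg_right hβ.2.le hlog).trans hαc
    linarith [sum_log_mul_rpow_le (N := N) hc (hβ.2.le.trans hα) hβc]

theorem rankinSum_neg_le {N p : ℕ} {s : ℝ} (hs : 0 < s) : rankinSum N p (-s) ≤ 1 + 1 / s := by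
  refine le_trans ?_ (sum_rpow_neg_one_sub_le hs N)
  rw [rankinSum, show -s - 1 = -1 - s by ring]
  refine sum_le_sum_of_subset_of_nonneg (fun e he => mem_Icc.2 ⟨?_, ?_⟩) fun _ _ _ => by positivity
  · exact Nat.one_le_iff_ne_zero.2 (ne_zero_of_mem_smoothNumbersUpTo he)
  · exact (Nat.mem_smoothNumbersUpTo.1 he).1

theorem half_le_log_of_two_le {x : ℝ} (hx : 2 ≤ x) : 1 / 2 ≤ Real.log x := by
  linarith [Real.log_two_gt_d9, Real.log_le_log two_pos hx]

theorem exists_rankinSum_le {c : ℝ} (hc : 0 ≤ c) : ∃ C : ℝ, 0 < C ∧ ∀ N p : ℕ, 2 ≤ p →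
    ∀ α : ℝ, 0 ≤ α → α ≤ 1 / 4 → α * Real.log p ≤ c → rankinSum N p α ≤ C * Real.log p := by
  refine ⟨3 * Real.exp (5 * Real.exp c * (c + 1)), by positivity, fun N p hp α hα0 hα hαc => ?_⟩
  have hL : 1 / 2 ≤ Real.log p := half_le_log_of_two_le (by exact_mod_cast hp)
  set L := Real.log p
  have hinv : 0 < 1 / L := by positivity
  calc rankinSum N p α
      ≤ rankinSum N p (-(1 / L)) * Real.exp (5 * Real.exp c * L * (α - -(1 / L))) :=
        rankinSum_le_mul_exp hc (by linarith) hα hαc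
    _ ≤ (1 + 1 / (1 / L)) * Real.exp (5 * Real.exp c * (c + 1)) := by
        have hlen : L * (α - -(1 / L)) ≤ c + 1 := by
          rw [sub_neg_eq_add, mul_add, mul_one_div_cancel (by positivity)]
          linarith
        rw [mul_assoc]
        gcongr
        exact rankinSum_neg_le hinv
    _ ≤ 3 * L * Real.exp (5 * Real.exp c * (c + 1)) := by
        gcongr
        rw [one_div_one_div]
        linarith
    _ = _ := by ring

/-- The largest prime factor of `n`, with value `0` when `n ≤ 1`. -/
def largestPrimeFactor (n : ℕ) : ℕ := n.primeFactors.sup id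

theorem largestPrimeFactor_le_iff {n p : ℕ} :
    largestPrimeFactor n ≤ p ↔ ∀ r ∈ n.primeFactors, r ≤ p :=
  Finset.sup_le_iff

theorem largestPrimeFactor_le_of_dvd {m n : ℕ} (hn : n ≠ 0) (h : m ∣ n) :
    largestPrimeFactor m ≤ largestPrimeFactor n :=
  sup_mono (Nat.primeFactors_mono h hn)

theorem largestPrimeFactor_mem_primeFactors {n : ℕ} (hn : 0 < largestPrimeFactor n) :
    largestPrimeFactor n ∈ n.primeFactors := by
  have hne : n.primeFactors.Nonempty := by
    by_contra! h
    simp [largestPrimeFactor, h] at hn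
  obtain ⟨p, hp, hsup⟩ := exists_mem_eq_sup _ hne id
  rwa [largestPrimeFactor, hsup]

theorem mem_smoothNumbersUpTo_succ_iff {N p e : ℕ} (he : e ≠ 0) :
    e ∈ Nat.smoothNumbersUpTo N (p + 1) ↔ e ≤ N ∧ largestPrimeFactor e ≤ p := by
  simp only [Nat.mem_smoothNumbersUpTo, Nat.mem_smoothNumbers, largestPrimeFactor_le_iff,
    Nat.lt_succ_iff, ← List.mem_toFinset]
  exact and_congr_right fun _ => and_iff_right he

/-- The exponent `c / log (max y P(e))`, where `P(e)` is the largest prime factor of `e`. Divisors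
of numbers without prime factors below `P(e)` are counted by a power with such an exponent. -/
noncomputable def smoothExponent (c : ℝ) (y e : ℕ) : ℝ :=
  c / Real.log (max y (largestPrimeFactor e) : ℕ)

theorem sum_rpow_of_largestPrimeFactor_eq_le {p : ℕ} (hp : p.Prime) (N : ℕ) (c : ℝ) :
    ∑ e ∈ Icc 1 N with largestPrimeFactor e = p, (e : ℝ) ^ (c / Real.log p - 1) ≤
      Real.exp c / p * rankinSum N p (c / Real.log p) := by
  have hp0 : (0 : ℝ) < p := by exact_mod_cast hp.pos
  have hlogp : 0 < Real.log p := Real.log_pos (by exact_mod_cast hp.one_lt)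
  calc ∑ e ∈ Icc 1 N with largestPrimeFactor e = p, (e : ℝ) ^ (c / Real.log p - 1)
      ≤ ∑ e ∈ (Nat.smoothNumbersUpTo N (p + 1)).image (p * ·), (e : ℝ) ^ (c / Real.log p - 1) := by
        refine sum_le_sum_of_subset_of_nonneg (fun e he => ?_) fun _ _ _ => by positivity
        obtain ⟨heN, hep⟩ := mem_filter.1 he
        obtain ⟨he1, heN⟩ := mem_Icc.1 heN
        obtain ⟨f, rfl⟩ := Nat.dvd_of_mem_primeFactors
          (hep ▸ largestPrimeFactor_mem_primeFactors (hep ▸ hp.pos))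
        exact mem_image_of_mem _ (mem_smoothNumbersUpTo_of_mul_mem hp.pos
          ((mem_smoothNumbersUpTo_succ_iff (by omega)).2 ⟨heN, hep.le⟩))
    _ = ∑ f ∈ Nat.smoothNumbersUpTo N (p + 1), ((p * f : ℕ) : ℝ) ^ (c / Real.log p - 1) :=
        sum_image fun a _ b _ h => Nat.eq_of_mul_eq_mul_left hp.pos h
    _ = _ := by
        rw [rankinSum, mul_sum]
        refine sum_congr rfl fun f _ => ?_
        rw [Nat.cast_mul, Real.mul_rpow hp0.le f.cast_nonneg, Real.rpow_sub_one hp0.ne',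
          Real.rpow_def_of_pos hp0, mul_div_cancel₀ _ hlogp.ne']

theorem sum_rpow_smoothExponent_of_le_le (N : ℕ) (c : ℝ) (y : ℕ) :
    ∑ e ∈ Icc 1 N with largestPrimeFactor e ≤ y, (e : ℝ) ^ (smoothExponent c y e - 1) ≤
      rankinSum N y (c / Real.log y) := by
  rw [sum_congr rfl fun e he => by rw [smoothExponent, max_eq_left (mem_filter.1 he).2]]
  refine sum_le_sum_of_subset_of_nonneg (fun e he => ?_) fun _ _ _ => by positivity
  obtain ⟨heN, hey⟩ := mem_filter.1 he
  obtain ⟨he1, heN⟩ := mem_Icc.1 heN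
  exact (mem_smoothNumbersUpTo_succ_iff (by omega)).2 ⟨heN, hey⟩

theorem sum_rpow_smoothExponent_of_lt_le (N : ℕ) (c : ℝ) (y : ℕ) :
    ∑ e ∈ Icc 1 N with ¬largestPrimeFactor e ≤ y, (e : ℝ) ^ (smoothExponent c y e - 1) ≤
      ∑ p ∈ Nat.primesLE N with y < p, Real.exp c / p * rankinSum N p (c / Real.log p) := by
  rw [← sum_fiberwise_of_maps_to (g := largestPrimeFactor) (t := (Nat.primesLE N).filter (y < ·))]
  · refine sum_le_sum fun p hp => ?_
    obtain ⟨hpN, hyp⟩ := mem_filter.1 hp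
    refine le_trans ?_ (sum_rpow_of_largestPrimeFactor_eq_le (Nat.prime_of_mem_primesLE hpN) N c)
    rw [filter_filter, sum_congr rfl fun e he => by
      rw [smoothExponent, (mem_filter.1 he).2.2, max_eq_right hyp.le]]
    refine sum_le_sum_of_subset_of_nonneg (fun e he => ?_) fun _ _ _ => by positivity
    exact mem_filter.2 ⟨(mem_filter.1 he).1, (mem_filter.1 he).2.2⟩
  · intro e he
    obtain ⟨heN, hey⟩ := mem_filter.1 he
    have hmem := largestPrimeFactor_mem_primeFactors (n := e) (by omega)
    exact mem_filter.2 ⟨Nat.mem_primesLE.2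
      ⟨(Nat.le_of_mem_primeFactors hmem).trans (mem_Icc.1 heN).2,
        Nat.prime_of_mem_primeFactors hmem⟩, not_le.1 hey⟩

theorem exists_rankinSum_div_log_le {c : ℝ} (hc : 0 ≤ c) {y : ℕ} (hy : 2 ≤ y)
    (hcy : 4 * c ≤ Real.log y) : ∃ C : ℝ, 0 < C ∧ ∀ N p : ℕ, y ≤ p →
      rankinSum N p (c / Real.log p) ≤ C * Real.log p := by
  obtain ⟨C, hC, hrankin⟩ := exists_rankinSum_le hc
  refine ⟨C, hC, fun N p hyp => ?_⟩
  have hlogy : 0 < Real.log y := Real.log_pos (by exact_mod_cast hy)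
  have hlog : Real.log y ≤ Real.log p := Real.log_le_log (by positivity) (by exact_mod_cast hyp)
  have hlogp : 0 < Real.log p := by linarith
  refine hrankin N p (hy.trans hyp) _ (by positivity) ?_ (div_mul_cancel₀ _ hlogp.ne').le
  rw [div_le_iff₀ hlogp]
  linarith

theorem exists_sum_rpow_smoothExponent_le {c : ℝ} (hc : 0 ≤ c) {y : ℕ} (hy : 2 ≤ y)
    (hcy : 4 * c ≤ Real.log y) : ∃ C : ℝ, 0 < C ∧ ∀ N : ℕ, 2 ≤ N →
      ∑ e ∈ Icc 1 N, (e : ℝ) ^ (smoothExponent c y e - 1) ≤ C * Real.log N := by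
  obtain ⟨C, hC, hbound⟩ := exists_rankinSum_div_log_le hc hy hcy
  have hlogy : 1 / 2 ≤ Real.log y := half_le_log_of_two_le (by exact_mod_cast hy)
  refine ⟨2 * C * Real.log y + 2 * Real.exp c * C, by positivity, fun N hN => ?_⟩
  have hlogN : 1 / 2 ≤ Real.log N := half_le_log_of_two_le (by exact_mod_cast hN)
  have hlarge : ∑ p ∈ Nat.primesLE N with y < p,
      Real.exp c / p * rankinSum N p (c / Real.log p) ≤ Real.exp c * C * (2 * Real.log N) := by
    calc ∑ p ∈ Nat.primesLE N with y < p, Real.exp c / p * rankinSum N p (c / Real.log p)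
        ≤ ∑ p ∈ Nat.primesLE N with y < p, Real.exp c * C * (Real.log p / p) := by
          refine sum_le_sum fun p hp => ?_
          calc _ ≤ Real.exp c / p * (C * Real.log p) := by
                gcongr
                exact hbound N p (mem_filter.1 hp).2.le
            _ = _ := by ring
      _ ≤ ∑ p ∈ Nat.primesLE N, Real.exp c * C * (Real.log p / p) :=
          sum_le_sum_of_subset_of_nonneg (filter_subset _ _) fun p _ _ => by
            have := Real.log_natCast_nonneg p
            positivity
      _ ≤ Real.exp c * C * (2 * Real.log N) := by
          rw [← mul_sum]
          gcongr
          exact sum_log_div_primesLE_le N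
  rw [← sum_filter_add_sum_filter_not _ fun e => largestPrimeFactor e ≤ y]
  calc _ ≤ C * Real.log y + Real.exp c * C * (2 * Real.log N) :=
        add_le_add ((sum_rpow_smoothExponent_of_le_le N c y).trans (hbound N y le_rfl))
          ((sum_rpow_smoothExponent_of_lt_le N c y).trans hlarge)
    _ ≤ C * Real.log y * (2 * Real.log N) + Real.exp c * C * (2 * Real.log N) :=
        add_le_add (le_mul_of_one_le_right (by positivity) (by linarith)) le_rfl
    _ = _ := by ring

theorem card_divisors_le_prod_mul_rpow {n : ℕ} (hn : n ≠ 0) {c : ℝ} {b : ℕ → ℝ}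
    (hb : ∀ p ∈ n.primeFactors, ∀ v : ℕ, (v + 1 : ℝ) ≤ b p * ((p : ℝ) ^ c) ^ v) :
    (n.divisors.card : ℝ) ≤ (∏ p ∈ n.primeFactors, b p) * (n : ℝ) ^ c := by
  have hfactor : (n : ℝ) ^ c = ∏ p ∈ n.primeFactors, ((p : ℝ) ^ c) ^ n.factorization p := by
    conv_lhs => rw [← Nat.prod_factorization_pow_eq_self hn, Finsupp.prod, Nat.cast_prod,
      ← Real.finsetProd_rpow _ _ fun _ _ => by positivity]
    refine prod_congr rfl fun p _ => ?_
    rw [Nat.cast_pow, ← Real.rpow_natCast, ← Real.rpow_natCast,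
      ← Real.rpow_mul p.cast_nonneg, ← Real.rpow_mul p.cast_nonneg, mul_comm]
  rw [Nat.card_divisors hn, hfactor, ← prod_mul_distrib]
  push_cast
  exact prod_le_prod (fun _ _ => by positivity) fun p hp => hb p hp _

theorem natCast_add_one_le_pow_of_two_le {x : ℝ} (hx : 2 ≤ x) (v : ℕ) : (v + 1 : ℝ) ≤ x ^ v := by
  have := one_add_mul_le_pow (show -2 ≤ x - 1 by linarith) v
  rw [add_sub_cancel] at this
  nlinarith [(v.cast_nonneg : (0 : ℝ) ≤ v)]

theorem card_divisors_le_rpow {n : ℕ} (hn : n ≠ 0) {c : ℝ}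
    (h : ∀ p ∈ n.primeFactors, 2 ≤ (p : ℝ) ^ c) : (n.divisors.card : ℝ) ≤ (n : ℝ) ^ c := by
  simpa using card_divisors_le_prod_mul_rpow hn (b := 1) fun p hp v => by
    simpa using natCast_add_one_le_pow_of_two_le (h p hp) v

theorem exists_natCast_add_one_le_mul_pow {t : ℝ} (ht : 0 < t) :
    ∃ B : ℝ, 1 ≤ B ∧ ∀ (x : ℝ) (v : ℕ), 1 + t ≤ x → (v + 1 : ℝ) ≤ B * x ^ v := by
  refine ⟨1 + 1 / t, le_add_of_nonneg_right (by positivity), fun x v hx => ?_⟩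
  calc (v + 1 : ℝ) ≤ v + 1 + (v * t + 1 / t) := le_add_of_nonneg_right (by positivity)
    _ = (1 + 1 / t) * (1 + v * t) := by field_simp; ring
    _ ≤ (1 + 1 / t) * (1 + t) ^ v := by
        gcongr
        exact one_add_mul_le_pow (by linarith) v
    _ ≤ (1 + 1 / t) * x ^ v := by gcongr

theorem exists_card_divisors_le_mul_rpow {c : ℝ} (hc : 0 < c) :
    ∃ C : ℝ, 1 ≤ C ∧ ∀ n : ℕ, n ≠ 0 → (n.divisors.card : ℝ) ≤ C * (n : ℝ) ^ c := by
  obtain ⟨B, hB, hbound⟩ := exists_natCast_add_one_le_mul_pow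
    (sub_pos.2 (Real.one_lt_rpow one_lt_two hc))
  set N : ℕ := ⌈(2 : ℝ) ^ (1 / c)⌉₊
  refine ⟨B ^ N, one_le_pow₀ hB, fun n hn => ?_⟩
  refine (card_divisors_le_prod_mul_rpow hn (c := c) (b := fun p => if p < N then B else 1)
    ?_).trans ?_
  · intro p hp v
    have hp2 : (2 : ℝ) ≤ p := by exact_mod_cast (Nat.prime_of_mem_primeFactors hp).two_le
    split_ifs with hpN
    · refine hbound _ v ?_
      rw [add_sub_cancel]
      gcongr
    · rw [one_mul]
      refine natCast_add_one_le_pow_of_two_le ?_ v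
      calc (2 : ℝ) = ((2 : ℝ) ^ (1 / c)) ^ c := by
            rw [← Real.rpow_mul two_pos.le, one_div_mul_cancel hc.ne', Real.rpow_one]
        _ ≤ (p : ℝ) ^ c := by
            gcongr
            exact (Nat.le_ceil _).trans (by exact_mod_cast not_lt.1 hpN)
  · gcongr
    rw [prod_ite, prod_const_one, mul_one, prod_const]
    refine pow_le_pow_right₀ hB ?_
    calc _ ≤ (range N).card := card_le_card fun p hp => mem_range.2 (mem_filter.1 hp).2
      _ = N := card_range N

theorem exists_card_divisors_le_rpow_inv_log {y : ℕ} (hy : 2 ≤ y) :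
    ∃ C : ℝ, 1 ≤ C ∧ ∀ p f : ℕ, f ≠ 0 → (∀ r ∈ f.primeFactors, p ≤ r) →
      (f.divisors.card : ℝ) ≤ C * (f : ℝ) ^ (1 / Real.log (max y p : ℕ)) := by
  have hlogy : 0 < Real.log y := Real.log_pos (by exact_mod_cast hy)
  obtain ⟨C, hC, hdiv⟩ := exists_card_divisors_le_mul_rpow (one_div_pos.2 hlogy)
  refine ⟨C, hC, fun p f hf hpf => ?_⟩
  rcases le_total p y with hpy | hyp
  · rw [max_eq_left hpy]
    exact hdiv f hf
  rw [max_eq_right hyp]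
  have hp1 : (1 : ℝ) < p := by exact_mod_cast lt_of_lt_of_le hy hyp
  have hlogp : 0 < Real.log p := Real.log_pos hp1
  refine (card_divisors_le_rpow hf fun r hr => ?_).trans (le_mul_of_one_le_left (by positivity) hC)
  calc (2 : ℝ) ≤ Real.exp 1 := by linarith [Real.add_one_le_exp 1]
    _ = (p : ℝ) ^ (1 / Real.log p) := by
        rw [Real.rpow_def_of_pos (by linarith), mul_one_div_cancel hlogp.ne']
    _ ≤ (r : ℝ) ^ (1 / Real.log p) := by
        gcongr
        exact hpf r hr

theorem card_divisors_le_two_mul_card_filter (n : ℕ) :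
    n.divisors.card ≤ 2 * (n.divisors.filter fun e => n ≤ e ^ 2).card := by
  have hsmall : (n.divisors.filter fun e => ¬n ≤ e ^ 2).card ≤
      (n.divisors.filter fun e => n ≤ e ^ 2).card := by
    refine card_le_card_of_injOn (n / ·) (fun e he => ?_) fun a ha b hb hab => ?_
    · obtain ⟨hen, hlt⟩ := mem_filter.1 he
      obtain ⟨⟨f, rfl⟩, hn⟩ := Nat.mem_divisors.1 hen
      have he0 : 0 < e := Nat.pos_of_ne_zero (left_ne_zero_of_mul hn)
      have hef : e < f := lt_of_mul_lt_mul_left (sq e ▸ not_le.1 hlt) he0.le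
      simp only [coe_filter, Set.mem_ofPred_eq, Nat.mul_div_cancel_left f he0, Nat.mem_divisors]
      exact ⟨⟨Dvd.intro_left e rfl, hn⟩, by nlinarith⟩
    · have ha' := Nat.mem_divisors.1 (mem_filter.1 ha).1
      have hb' := Nat.mem_divisors.1 (mem_filter.1 hb).1
      rw [← Nat.div_div_self ha'.1 ha'.2, ← Nat.div_div_self hb'.1 hb'.2]
      exact congrArg (n / ·) hab
  rw [← card_filter_add_card_filter_not (s := n.divisors) fun e => n ≤ e ^ 2]
  omega

theorem card_divisors_mul_le (a b : ℕ) :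
    (a * b).divisors.card ≤ a.divisors.card * b.divisors.card := by
  rw [Nat.divisors_mul]
  exact card_mul_le

theorem exists_initial_divisor {m J : ℕ} (hm : m ≠ 0) (hJ : 1 ≤ J) :
    ∃ g f, m = g * f ∧ g ≤ J ∧ (f = 1 ∨ ∃ p, J < g * p ∧ largestPrimeFactor g ≤ p ∧
      ∀ r ∈ f.primeFactors, p ≤ r) := by
  let initial : Finset ℕ := m.divisors.filter fun g =>
    g ≤ J ∧ ∀ s ∈ g.primeFactors, ∀ r ∈ (m / g).primeFactors, s ≤ r
  obtain ⟨g, hg, hmax⟩ := exists_max_image initial id ⟨1, by simp [initial, hm, hJ]⟩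
  simp only [initial, mem_filter, Nat.mem_divisors, id] at hg hmax
  obtain ⟨⟨⟨f, rfl⟩, -⟩, hgJ, hgf⟩ := hg
  have hg0 : 0 < g := Nat.pos_of_ne_zero (left_ne_zero_of_mul hm)
  have hf0 : f ≠ 0 := right_ne_zero_of_mul hm
  rw [Nat.mul_div_cancel_left f hg0] at hgf
  refine ⟨g, f, rfl, hgJ, or_iff_not_imp_left.2 fun hf1 => ?_⟩
  have hp : f.minFac.Prime := Nat.minFac_prime hf1
  have hmin : ∀ r ∈ f.primeFactors, f.minFac ≤ r := fun r hr =>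
    Nat.minFac_le_of_dvd (Nat.prime_of_mem_primeFactors hr).two_le (Nat.dvd_of_mem_primeFactors hr)
  have hgp : ∀ s ∈ g.primeFactors, s ≤ f.minFac := fun s hs =>
    hgf s hs _ (Nat.mem_primeFactors.2 ⟨hp, Nat.minFac_dvd f, hf0⟩)
  refine ⟨f.minFac, not_le.1 fun hle => ?_, largestPrimeFactor_le_iff.2 hgp, hmin⟩
  -- Otherwise `g * f.minFac` would be a larger admissible divisor.
  have hcofactor : g * f / (g * f.minFac) = f / f.minFac := Nat.mul_div_mul_left _ _ hg0
  have hlarger := hmax (g * f.minFac) ⟨⟨Nat.mul_dvd_mul_left g (Nat.minFac_dvd f), hm⟩, hle,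
    fun s hs r hr => ?_⟩
  · nlinarith [hp.two_le]
  · rw [hcofactor] at hr
    rw [Nat.primeFactors_mul hg0.ne' hp.ne_zero, hp.primeFactors, mem_union, mem_singleton] at hs
    have hpr := hmin r (Nat.primeFactors_mono (Nat.div_dvd_of_dvd (Nat.minFac_dvd f)) hf0 hr)
    rcases hs with hs | rfl
    · exact (hgp s hs).trans hpr
    · exact hpr

theorem card_mul_le_sum_of_subset {ι : Type*} {s t : Finset ι} {w : ι → ℝ} {x : ℝ} (hst : s ⊆ t)
    (hw : ∀ i ∈ t, 0 ≤ w i) (hx : ∀ i ∈ s, x ≤ w i) : s.card * x ≤ ∑ i ∈ t, w i := by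
  rw [← nsmul_eq_mul]
  exact (card_nsmul_le_sum s w x hx).trans
    (sum_le_sum_of_subset_of_nonneg hst fun i hi _ => hw i hi)

theorem rpow_div_log_le_rpow_smoothExponent {e p y J : ℕ} (hy : 2 ≤ y) (he : 0 < e)
    (hep : largestPrimeFactor e ≤ p) (hJe : J ≤ e ^ 4) {a : ℝ} (ha : 0 ≤ a) :
    (J : ℝ) ^ (a / Real.log (max y p : ℕ)) ≤ (e : ℝ) ^ smoothExponent (4 * a) y e := by
  have he1 : (1 : ℝ) ≤ e := by exact_mod_cast he
  have hlog : 0 < Real.log (max y (largestPrimeFactor e) : ℕ) :=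
    Real.log_pos (by exact_mod_cast hy.trans (le_max_left _ _))
  calc (J : ℝ) ^ (a / Real.log (max y p : ℕ))
      ≤ ((e ^ 4 : ℕ) : ℝ) ^ (a / Real.log (max y p : ℕ)) :=
        Real.rpow_le_rpow J.cast_nonneg (by exact_mod_cast hJe)
          (div_nonneg ha (Real.log_natCast_nonneg _))
    _ = (e : ℝ) ^ (4 * a / Real.log (max y p : ℕ)) := by
        rw [Nat.cast_pow, ← Real.rpow_natCast, ← Real.rpow_mul e.cast_nonneg, Nat.cast_ofNat,
          mul_div_assoc]
    _ ≤ (e : ℝ) ^ smoothExponent (4 * a) y e := by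
        rw [smoothExponent]
        gcongr

theorem rpow_div_log_le_exp {J p y : ℕ} (hJ : 2 ≤ J) (hJp : J ≤ p ^ 2) {a : ℝ} (ha : 0 ≤ a) :
    (J : ℝ) ^ (a / Real.log (max y p : ℕ)) ≤ Real.exp (2 * a) := by
  have hJ0 : (0 : ℝ) < J := by positivity
  have hlogJ : 1 / 2 ≤ Real.log J := half_le_log_of_two_le (by exact_mod_cast hJ)
  have hlog : Real.log J ≤ 2 * Real.log (max y p : ℕ) := by
    rw [← Nat.cast_ofNat, ← Real.log_pow]
    refine Real.log_le_log hJ0 ?_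
    exact_mod_cast hJp.trans (Nat.pow_le_pow_left (le_max_right y p) 2)
  rw [Real.rpow_def_of_pos hJ0, Real.exp_le_exp, ← mul_div_assoc, div_le_iff₀ (by linarith)]
  nlinarith

theorem card_divisors_le_sum_rpow_smoothExponent (g y : ℕ) {c : ℝ} (hc : 0 ≤ c) :
    (g.divisors.card : ℝ) ≤ ∑ e ∈ g.divisors, (e : ℝ) ^ smoothExponent c y e := by
  have hone : ∀ e ∈ g.divisors, 1 ≤ (e : ℝ) ^ smoothExponent c y e := fun e he =>
    Real.one_le_rpow (by exact_mod_cast Nat.pos_of_mem_divisors he)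
      (div_nonneg hc (Real.log_natCast_nonneg _))
  simpa using card_nsmul_le_sum _ _ 1 hone

theorem card_divisors_mul_rpow_le {g p y J : ℕ} (hy : 2 ≤ y) (hJ : 2 ≤ J) (hgJ : g ≤ J)
    (hJgp : J < g * p) (hgp : largestPrimeFactor g ≤ p) {a : ℝ} (ha : 0 ≤ a) :
    g.divisors.card * (J : ℝ) ^ (a / Real.log (max y p : ℕ)) ≤
      2 * Real.exp (2 * a) * ∑ e ∈ g.divisors, (e : ℝ) ^ smoothExponent (4 * a) y e := by
  have hexp : 1 ≤ Real.exp (2 * a) := Real.one_le_exp (by positivity)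
  set W := ∑ e ∈ g.divisors, (e : ℝ) ^ smoothExponent (4 * a) y e
  have hg : g ≠ 0 := by rintro rfl; simp at hJgp
  have hnonneg : ∀ e ∈ g.divisors, 0 ≤ (e : ℝ) ^ smoothExponent (4 * a) y e := fun _ _ => by
    positivity
  have hW : 0 ≤ W := sum_nonneg hnonneg
  rcases le_or_gt J (p ^ 2) with hJp | hpJ
  · have hcard : (g.divisors.card : ℝ) ≤ W :=
      card_divisors_le_sum_rpow_smoothExponent g y (by positivity)
    calc _ ≤ W * Real.exp (2 * a) := by
          gcongr
          exact rpow_div_log_le_exp hJ hJp ha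
      _ ≤ _ := by nlinarith
  · have hJg : J < g ^ 2 := by
      refine lt_of_mul_lt_mul_right (a := p ^ 2) ?_ (Nat.zero_le _)
      calc J * p ^ 2 ≤ J * J := Nat.mul_le_mul_left J hpJ.le
        _ < (g * p) * (g * p) := Nat.mul_lt_mul'' hJgp hJgp
        _ = g ^ 2 * p ^ 2 := by ring
    have hcard : (g.divisors.filter fun e => g ≤ e ^ 2).card *
        (J : ℝ) ^ (a / Real.log (max y p : ℕ)) ≤ W :=
      card_mul_le_sum_of_subset (filter_subset _ _) hnonneg fun e he => by
        obtain ⟨heg, hge⟩ := mem_filter.1 he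
        have hJe : J ≤ e ^ 4 := by nlinarith [Nat.pow_le_pow_left hge 2]
        exact rpow_div_log_le_rpow_smoothExponent hy (Nat.pos_of_mem_divisors heg)
          ((largestPrimeFactor_le_of_dvd hg (Nat.dvd_of_mem_divisors heg)).trans hgp) hJe ha
    have hhalf : (g.divisors.card : ℝ) ≤ 2 * (g.divisors.filter fun e => g ≤ e ^ 2).card := by
      exact_mod_cast card_divisors_le_two_mul_card_filter g
    calc _ ≤ 2 * (g.divisors.filter fun e => g ≤ e ^ 2).card *
          (J : ℝ) ^ (a / Real.log (max y p : ℕ)) := by gcongr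
      _ ≤ _ := by nlinarith

theorem exists_card_divisors_le_sum_rpow_smoothExponent (A : ℕ) {y : ℕ} (hy : 2 ≤ y) :
    ∃ C : ℝ, 0 < C ∧ ∀ J m : ℕ, 2 ≤ J → m ≠ 0 → m ≤ J ^ A → (m.divisors.card : ℝ) ≤
      C * ∑ e ∈ m.divisors with e ≤ J, (e : ℝ) ^ smoothExponent (4 * A) y e := by
  obtain ⟨C, hC, hdiv⟩ := exists_card_divisors_le_rpow_inv_log hy
  refine ⟨C * (2 * Real.exp (2 * A)), by positivity, fun J m hJ hm hmJ => ?_⟩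
  obtain ⟨g, f, rfl, hgJ, hf⟩ := exists_initial_divisor (J := J) hm (by omega)
  have hg0 : 0 < g := Nat.pos_of_ne_zero (left_ne_zero_of_mul hm)
  have hsub : g.divisors ⊆ (g * f).divisors.filter (· ≤ J) := fun e he =>
    mem_filter.2 ⟨Nat.divisors_subset_of_dvd hm (Nat.dvd_mul_right g f) he,
      (Nat.divisor_le he).trans hgJ⟩
  have hsum : ∑ e ∈ g.divisors, (e : ℝ) ^ smoothExponent (4 * A) y e ≤
      ∑ e ∈ (g * f).divisors with e ≤ J, (e : ℝ) ^ smoothExponent (4 * A) y e :=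
    sum_le_sum_of_subset_of_nonneg hsub fun _ _ _ => by positivity
  refine le_trans ?_ (mul_le_mul_of_nonneg_left hsum (by positivity))
  have hexp : 1 ≤ Real.exp (2 * A) := Real.one_le_exp (by positivity)
  rcases hf with rfl | ⟨p, hJgp, hgp, hpf⟩
  · rw [mul_one]
    refine (card_divisors_le_sum_rpow_smoothExponent g y (c := 4 * A) (by positivity)).trans ?_
    refine le_mul_of_one_le_left (sum_nonneg fun _ _ => by positivity) ?_
    nlinarith
  have hdivf : (f.divisors.card : ℝ) ≤ C * (J : ℝ) ^ (A / Real.log (max y p : ℕ)) := by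
    refine (hdiv p f (right_ne_zero_of_mul hm) hpf).trans ?_
    rw [div_eq_mul_one_div (A : ℝ), Real.rpow_mul J.cast_nonneg, Real.rpow_natCast]
    gcongr
    exact_mod_cast (Nat.le_mul_of_pos_left f hg0).trans hmJ
  calc ((g * f).divisors.card : ℝ) ≤ g.divisors.card * f.divisors.card := by
        exact_mod_cast card_divisors_mul_le g f
    _ ≤ g.divisors.card * (C * (J : ℝ) ^ (A / Real.log (max y p : ℕ))) := by gcongr
    _ = C * (g.divisors.card * (J : ℝ) ^ (A / Real.log (max y p : ℕ))) := by ring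
    _ ≤ C * (2 * Real.exp (2 * A) *
          ∑ e ∈ g.divisors, (e : ℝ) ^ smoothExponent (4 * A) y e) :=
        mul_le_mul_of_nonneg_left (card_divisors_mul_rpow_le hy hJ hgJ hJgp hgp A.cast_nonneg)
          (by positivity)
    _ = _ := by ring

/-- The members of `(x, x + q * J]` congruent to `u` modulo `q`, that is, `J` consecutive terms of
an arithmetic progression of difference `q`. -/
def apSet (q u x J : ℕ) : Finset ℕ := (Ioc x (x + q * J)).filter (· ≡ u [MOD q])

theorem card_Ioc_filter_modEq_le (x L v : ℕ) {r : ℕ} (hr : 0 < r) :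
    (((Ioc x (x + L)).filter (· ≡ v [MOD r])).card : ℝ) ≤ L / r + 1 := by
  have hcard := Nat.Ioc_filter_modEq_card x (x + L) hr v
  set N := ((Ioc x (x + L)).filter (· ≡ v [MOD r])).card
  have hdiff : (((x + L : ℕ) : ℚ) - v) / r - (x - v) / r = L / r := by push_cast; ring
  have hupper := Int.floor_le ((((x + L : ℕ) : ℚ) - v) / r)
  have hlower := Int.lt_floor_add_one (((x : ℚ) - v) / r)
  have hmono : ⌊((x : ℚ) - v) / r⌋ ≤ ⌊(((x + L : ℕ) : ℚ) - v) / r⌋ :=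
    Int.floor_mono (sub_nonneg.1 (hdiff ▸ by positivity))
  rw [max_eq_left (sub_nonneg.2 hmono)] at hcard
  have hcard' : (N : ℚ) =
      ⌊(((x + L : ℕ) : ℚ) - v) / r⌋ - ⌊((x : ℚ) - v) / r⌋ := by exact_mod_cast hcard
  have hN : (N : ℚ) ≤ L / r + 1 := by linarith
  simpa using (Rat.cast_le (K := ℝ)).2 hN

theorem card_dvd_apSet_le {q e : ℕ} (u x J : ℕ) (hq : 0 < q) (he : 0 < e) (heq : e.Coprime q) :
    (((apSet q u x J).filter (e ∣ ·)).card : ℝ) ≤ J / e + 1 := by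
  obtain ⟨v, hvu, hve⟩ := Nat.chineseRemainder heq.symm u 0
  have hclass : (apSet q u x J).filter (e ∣ ·) ⊆
      (Ioc x (x + q * J)).filter (· ≡ v [MOD q * e]) := fun m hm => by
    obtain ⟨hmA, hem⟩ := mem_filter.1 hm
    obtain ⟨hmI, hmu⟩ := mem_filter.1 hmA
    exact mem_filter.2 ⟨hmI, (Nat.modEq_and_modEq_iff_modEq_mul heq.symm).1
      ⟨hmu.trans hvu.symm, (Nat.modEq_zero_iff_dvd.2 hem).trans hve.symm⟩⟩
  calc (((apSet q u x J).filter (e ∣ ·)).card : ℝ)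
      ≤ ((Ioc x (x + q * J)).filter (· ≡ v [MOD q * e])).card := by
        exact_mod_cast card_le_card hclass
    _ ≤ (q * J : ℕ) / (q * e : ℕ) + 1 :=
        card_Ioc_filter_modEq_le x (q * J) v (Nat.mul_pos hq he)
    _ = J / e + 1 := by
        push_cast
        rw [mul_div_mul_left _ _ (by exact_mod_cast hq.ne')]

theorem pos_of_mem_apSet {q u x J m : ℕ} (hm : m ∈ apSet q u x J) : 0 < m :=
  (Nat.zero_le x).trans_lt (mem_Ioc.1 (mem_filter.1 hm).1).1

theorem coprime_of_mem_apSet {q u x J m : ℕ} (hu : u.Coprime q) (hm : m ∈ apSet q u x J) :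
    m.Coprime q :=
  (mem_filter.1 hm).2.gcd_eq.trans hu

theorem sum_sum_divisors_apSet_le {q u x J : ℕ} (hq : 0 < q) (hu : u.Coprime q) {w : ℕ → ℝ}
    (hw : ∀ e, 0 ≤ w e) :
    ∑ m ∈ apSet q u x J, ∑ e ∈ m.divisors with e ≤ J, w e ≤
      2 * J * ∑ e ∈ Icc 1 J, w e / e := by
  calc ∑ m ∈ apSet q u x J, ∑ e ∈ m.divisors with e ≤ J, w e
      = ∑ e ∈ Icc 1 J, ∑ m ∈ apSet q u x J with e ∣ m, w e := by
        refine sum_comm' fun m e => ?_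
        simp only [mem_filter, Nat.mem_divisors, mem_Icc]
        constructor
        · rintro ⟨hm, ⟨hem, -⟩, heJ⟩
          exact ⟨⟨hm, hem⟩, Nat.pos_of_dvd_of_pos hem (pos_of_mem_apSet hm), heJ⟩
        · rintro ⟨⟨hm, hem⟩, -, heJ⟩
          exact ⟨hm, ⟨hem, (pos_of_mem_apSet hm).ne'⟩, heJ⟩
    _ ≤ ∑ e ∈ Icc 1 J, 2 * (J / e) * w e := by
        refine sum_le_sum fun e he => ?_
        obtain ⟨he0, heJ⟩ := mem_Icc.1 he
        have he' : (0 : ℝ) < e := by exact_mod_cast he0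
        rw [sum_const, nsmul_eq_mul]
        refine mul_le_mul_of_nonneg_right ?_ (hw e)
        rcases ((apSet q u x J).filter (e ∣ ·)).eq_empty_or_nonempty with hempty | ⟨m, hm⟩
        · rw [hempty, card_empty, Nat.cast_zero]
          positivity
        · have heq : e.Coprime q := (coprime_of_mem_apSet hu (mem_filter.1 hm).1).coprime_dvd_left
            (mem_filter.1 hm).2
          have hone : (1 : ℝ) ≤ J / e := by
            rw [one_le_div he']
            exact_mod_cast heJ
          linarith [card_dvd_apSet_le u x J hq he0 heq]
    _ = 2 * J * ∑ e ∈ Icc 1 J, w e / e := by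
        rw [mul_sum]
        exact sum_congr rfl fun e _ => by ring

theorem exists_sum_card_divisors_apSet_le (A : ℕ) :
    ∃ C : ℝ, 0 < C ∧ ∀ q u x J : ℕ, 0 < q → u.Coprime q → 2 ≤ J → x + q * J ≤ J ^ A →
      ∑ m ∈ apSet q u x J, (m.divisors.card : ℝ) ≤ C * J * Real.log J := by
  obtain ⟨y, hy⟩ := exists_nat_ge (2 + Real.exp (4 * (4 * A)))
  have hexp : 0 < Real.exp (4 * (4 * A)) := Real.exp_pos _
  have hy2 : 2 ≤ y := by exact_mod_cast (show (2 : ℝ) ≤ y by linarith)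
  have hlogy : 4 * (4 * A) ≤ Real.log y :=
    (Real.le_log_iff_exp_le (by positivity)).2 (by linarith)
  obtain ⟨C, hC, hdiv⟩ := exists_card_divisors_le_sum_rpow_smoothExponent A hy2
  obtain ⟨D, hD, hsum⟩ := exists_sum_rpow_smoothExponent_le (c := 4 * A) (by positivity) hy2 hlogy
  refine ⟨2 * C * D, by positivity, fun q u x J hq hu hJ hA => ?_⟩
  calc ∑ m ∈ apSet q u x J, (m.divisors.card : ℝ)
      ≤ ∑ m ∈ apSet q u x J,
          C * ∑ e ∈ m.divisors with e ≤ J, (e : ℝ) ^ smoothExponent (4 * A) y e :=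
        sum_le_sum fun m hm => hdiv J m hJ (pos_of_mem_apSet hm).ne'
          ((mem_Ioc.1 (mem_filter.1 hm).1).2.trans hA)
    _ ≤ C * (2 * J * ∑ e ∈ Icc 1 J, (e : ℝ) ^ smoothExponent (4 * A) y e / e) := by
        rw [← mul_sum]
        gcongr
        exact sum_sum_divisors_apSet_le hq hu fun _ => by positivity
    _ = C * (2 * J * ∑ e ∈ Icc 1 J, (e : ℝ) ^ (smoothExponent (4 * A) y e - 1)) := by
        congr 2
        refine sum_congr rfl fun e he => (Real.rpow_sub_one ?_ _).symm
        exact_mod_cast Nat.one_le_iff_ne_zero.1 (mem_Icc.1 he).1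
    _ ≤ C * (2 * J * (D * Real.log J)) := by
        gcongr
        exact hsum J hJ
    _ = _ := by ring

theorem dvd_of_mem_apSet {h q u x J m : ℕ} (hm : m ∈ apSet (h * q) (h * u) x J) : h ∣ m :=
  ((mem_filter.1 hm).2.dvd_iff (Nat.dvd_mul_right h q)).2 (Nat.dvd_mul_right h u)

theorem div_mem_apSet {h q u x J m : ℕ} (hh : 0 < h) (hm : m ∈ apSet (h * q) (h * u) x J) :
    m / h ∈ apSet q u (x / h) J := by
  obtain ⟨m, rfl⟩ := dvd_of_mem_apSet hm
  rw [Nat.mul_div_cancel_left _ hh]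
  simp only [apSet, mem_filter, mem_Ioc] at hm ⊢
  obtain ⟨⟨hxm, hmx⟩, hmod⟩ := hm
  refine ⟨⟨?_, ?_⟩, Nat.ModEq.mul_left_cancel' hh.ne' hmod⟩
  · rwa [Nat.div_lt_iff_lt_mul hh, mul_comm]
  · rwa [← Nat.add_mul_div_left _ _ hh, Nat.le_div_iff_mul_le hh, mul_comm m h, ← mul_assoc]

theorem sum_card_divisors_apSet_mul_le {h : ℕ} (hh : 0 < h) (q u x J : ℕ) :
    ∑ m ∈ apSet (h * q) (h * u) x J, (m.divisors.card : ℝ) ≤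
      h.divisors.card * ∑ m ∈ apSet q u (x / h) J, (m.divisors.card : ℝ) := by
  have hinj : Set.InjOn (· / h) (apSet (h * q) (h * u) x J : Set ℕ) := fun m hm n hn hmn => by
    rw [← Nat.div_mul_cancel (dvd_of_mem_apSet hm), ← Nat.div_mul_cancel (dvd_of_mem_apSet hn)]
    exact congrArg (· * h) hmn
  calc ∑ m ∈ apSet (h * q) (h * u) x J, (m.divisors.card : ℝ)
      ≤ ∑ m ∈ apSet (h * q) (h * u) x J, (h.divisors.card : ℝ) * (m / h).divisors.card := by
        refine sum_le_sum fun m hm => ?_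
        rw [← Nat.cast_mul, Nat.cast_le]
        simpa only [Nat.mul_div_cancel' (dvd_of_mem_apSet hm)] using
          card_divisors_mul_le h (m / h)
    _ = h.divisors.card *
          ∑ m ∈ (apSet (h * q) (h * u) x J).image (· / h), (m.divisors.card : ℝ) := by
        rw [sum_image hinj, mul_sum]
    _ ≤ h.divisors.card * ∑ m ∈ apSet q u (x / h) J, (m.divisors.card : ℝ) := by
        refine mul_le_mul_of_nonneg_left ?_ (Nat.cast_nonneg _)
        exact sum_le_sum_of_subset_of_nonneg
          (image_subset_iff.2 fun m hm => div_mem_apSet hh hm) fun _ _ _ => Nat.cast_nonneg _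

theorem exists_sum_card_divisors_apSet_gcd_le (A : ℕ) : ∃ C : ℝ, 0 < C ∧ ∀ q u x J : ℕ, 0 < q →
    2 ≤ J → x + q * J ≤ J ^ A → ∑ m ∈ apSet q u x J, (m.divisors.card : ℝ) ≤
      C * (u.gcd q).divisors.card * J * Real.log J := by
  obtain ⟨C, hC, hbound⟩ := exists_sum_card_divisors_apSet_le A
  refine ⟨C, hC, fun q u x J hq hJ hxJ => ?_⟩
  obtain ⟨h, u', q', hh, hcop, rfl, rfl⟩ := Nat.exists_coprime' (Nat.gcd_pos_of_pos_right u hq)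
  rw [Nat.gcd_mul_right, hcop.gcd_eq_one, one_mul, mul_comm q', mul_comm u']
  have hq' : 0 < q' := Nat.pos_of_mul_pos_right hq
  have hle : x / h + q' * J ≤ J ^ A :=
    (add_le_add (Nat.div_le_self x h)
      (Nat.mul_le_mul_right J (Nat.le_mul_of_pos_right q' hh))).trans hxJ
  calc _ ≤ h.divisors.card * ∑ m ∈ apSet q' u' (x / h) J, (m.divisors.card : ℝ) :=
        sum_card_divisors_apSet_mul_le hh q' u' x J
    _ ≤ h.divisors.card * (C * J * Real.log J) :=
        mul_le_mul_of_nonneg_left (hbound q' u' (x / h) J hq' hcop hJ hle) (Nat.cast_nonneg _)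
    _ = C * h.divisors.card * J * Real.log J := by ring

theorem exists_sum_card_divisors_apSet_le_log {η : ℝ} (hη : 0 < η) : ∃ C : ℝ, 0 < C ∧
    ∀ (q u x J : ℕ) (X : ℝ), 0 < q → 2 ≤ X → X ^ η ≤ J → ((x + q * J : ℕ) : ℝ) ≤ 64 * X →
    ∑ m ∈ apSet q u x J, (m.divisors.card : ℝ) ≤
      C * (u.gcd q).divisors.card * J * Real.log X := by
  obtain ⟨C, hC, hbound⟩ := exists_sum_card_divisors_apSet_gcd_le ⌈7 / η⌉₊
  refine ⟨7 * C, by positivity, fun q u x J X hq hX hXJ hlen => ?_⟩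
  have hX0 : 0 ≤ X := by linarith
  have hJ1 : (1 : ℝ) < J := (Real.one_lt_rpow (by linarith) hη).trans_le hXJ
  have hX7 : 64 * X ≤ X ^ 7 := by
    have : (2 : ℝ) ^ 6 ≤ X ^ 6 := pow_le_pow_left₀ (by norm_num) hX 6
    rw [pow_succ]
    exact mul_le_mul_of_nonneg_right (by linarith) hX0
  have hXA : X ^ 7 ≤ (J : ℝ) ^ ⌈7 / η⌉₊ := calc
    X ^ 7 = (X ^ η) ^ (7 / η) := by
      rw [← Real.rpow_mul hX0, mul_div_cancel₀ _ hη.ne']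
      exact_mod_cast (Real.rpow_natCast X 7).symm
    _ ≤ (J : ℝ) ^ (7 / η) := by gcongr
    _ ≤ (J : ℝ) ^ (⌈7 / η⌉₊ : ℝ) := Real.rpow_le_rpow_of_exponent_le hJ1.le (Nat.le_ceil _)
    _ = (J : ℝ) ^ ⌈7 / η⌉₊ := Real.rpow_natCast _ _
  have hJX : (J : ℝ) ≤ X ^ 7 := by
    refine le_trans ?_ (hlen.trans hX7)
    exact_mod_cast (Nat.le_mul_of_pos_left J hq).trans (Nat.le_add_left _ x)
  have hlog : Real.log J ≤ 7 * Real.log X := by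
    simpa using Real.log_le_log (by linarith) hJX
  calc _ ≤ C * (u.gcd q).divisors.card * J * Real.log J :=
        hbound q u x J hq (by exact_mod_cast hJ1) (by exact_mod_cast hlen.trans (hX7.trans hXA))
    _ ≤ C * (u.gcd q).divisors.card * J * (7 * Real.log X) := by gcongr
    _ = 7 * C * (u.gcd q).divisors.card * J * Real.log X := by ring

theorem sum_one_div_dvd_le {N h : ℕ} (hh : 0 < h) :
    ∑ l ∈ Icc 1 N with h ∣ l, 1 / (l : ℝ) ≤ 1 / h * ∑ l ∈ Icc 1 N, 1 / (l : ℝ) := by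
  have hsub : (Icc 1 N).filter (h ∣ ·) ⊆ (Icc 1 N).image (h * ·) := by
    intro l hl
    simp only [mem_filter, mem_Icc, mem_image] at hl ⊢
    obtain ⟨⟨hl1, hlN⟩, t, rfl⟩ := hl
    exact ⟨t, ⟨Nat.pos_of_mul_pos_left hl1, (Nat.le_mul_of_pos_left t hh).trans hlN⟩, rfl⟩
  calc ∑ l ∈ Icc 1 N with h ∣ l, 1 / (l : ℝ)
      ≤ ∑ l ∈ (Icc 1 N).image (h * ·), 1 / (l : ℝ) :=
        sum_le_sum_of_subset_of_nonneg hsub fun _ _ _ => by positivity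
    _ = 1 / h * ∑ l ∈ Icc 1 N, 1 / (l : ℝ) := by
        rw [sum_image fun a _ b _ hab => Nat.eq_of_mul_eq_mul_left hh hab, mul_sum]
        exact sum_congr rfl fun l _ => by rw [Nat.cast_mul, one_div_mul_one_div]

theorem card_divisors_gcd_eq_sum {N m : ℕ} (hm : m ∈ Icc 1 N) (n : ℕ) :
    ((m.gcd n).divisors.card : ℝ) =
      ∑ h ∈ Icc 1 N, (if h ∣ m then 1 else 0) * (if h ∣ n then 1 else 0) := by
  rw [mem_Icc] at hm
  have hgcd : (m.gcd n).divisors = (Icc 1 N).filter fun h => h ∣ m ∧ h ∣ n := by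
    ext h
    simp only [Nat.mem_divisors, mem_filter, mem_Icc, Nat.dvd_gcd_iff]
    constructor
    · rintro ⟨⟨hhm, hhn⟩, -⟩
      exact ⟨⟨Nat.pos_of_dvd_of_pos hhm hm.1, (Nat.le_of_dvd hm.1 hhm).trans hm.2⟩, hhm, hhn⟩
    · rintro ⟨-, hhm, hhn⟩
      exact ⟨⟨hhm, hhn⟩, (Nat.gcd_pos_of_pos_left _ hm.1).ne'⟩
  simp only [hgcd, card_filter, Nat.cast_sum, ite_zero_mul_ite_zero, mul_one,
    Nat.cast_ite, Nat.cast_one, Nat.cast_zero]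

theorem sum_card_divisors_gcd_div_le (N : ℕ) :
    ∑ p ∈ Icc 1 N ×ˢ Icc 1 N, ((p.1.gcd p.2).divisors.card : ℝ) * (1 / p.1 * (1 / p.2)) ≤
      2 * (∑ l ∈ Icc 1 N, 1 / (l : ℝ)) ^ 2 := by
  set H := ∑ l ∈ Icc 1 N, 1 / (l : ℝ)
  calc ∑ p ∈ Icc 1 N ×ˢ Icc 1 N, ((p.1.gcd p.2).divisors.card : ℝ) * (1 / p.1 * (1 / p.2))
      = ∑ p ∈ Icc 1 N ×ˢ Icc 1 N, ∑ h ∈ Icc 1 N,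
          (if h ∣ p.1 then (1 / p.1 : ℝ) else 0) * (if h ∣ p.2 then (1 / p.2 : ℝ) else 0) := by
        refine sum_congr rfl fun p hp => ?_
        rw [card_divisors_gcd_eq_sum (mem_product.1 hp).1, sum_mul]
        refine sum_congr rfl fun h _ => ?_
        simp only [ite_mul, mul_ite, one_mul, zero_mul, mul_zero]
    _ = ∑ h ∈ Icc 1 N, (∑ l ∈ Icc 1 N with h ∣ l, 1 / (l : ℝ)) ^ 2 := by
        rw [sum_comm]
        exact sum_congr rfl fun h _ => by rw [sq, sum_filter, sum_mul_sum, sum_product]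
    _ ≤ ∑ h ∈ Icc 1 N, (1 / h * H) ^ 2 := by
        refine sum_le_sum fun h hh => ?_
        gcongr
        exact sum_one_div_dvd_le (mem_Icc.1 hh).1
    _ = (∑ h ∈ Ioo 0 (N + 1), ((h : ℝ) ^ 2)⁻¹) * H ^ 2 := by
        rw [sum_mul, show Icc 1 N = Ioo 0 (N + 1) by ext; simp only [mem_Icc, mem_Ioo]; omega]
        exact sum_congr rfl fun h _ => by rw [mul_pow, one_div, inv_pow]
    _ ≤ 2 * H ^ 2 := by
        gcongr
        simpa using sum_Ioo_inv_sq_le (α := ℝ) 0 (N + 1)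

theorem sum_one_div_Icc_floor_le {X : ℝ} (hX : 2 ≤ X) :
    ∑ l ∈ Icc 1 ⌊8 * X⌋₊, 1 / (l : ℝ) ≤ 6 * Real.log X := by
  have hfloor : Real.log ⌊8 * X⌋₊ ≤ Real.log (X ^ 4) := by
    refine Real.log_le_log (by exact_mod_cast Nat.floor_pos.2 (by linarith)) ?_
    have : (2 : ℝ) ^ 3 ≤ X ^ 3 := pow_le_pow_left₀ (by norm_num) hX 3
    calc (⌊8 * X⌋₊ : ℝ) ≤ 8 * X := Nat.floor_le (by linarith)
      _ ≤ X ^ 3 * X := by gcongr; linarith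
      _ = X ^ 4 := by ring
  have hharmonic := harmonic_le_one_add_log ⌊8 * X⌋₊
  rw [harmonic_eq_sum_Icc] at hharmonic
  push_cast [Real.log_pow] at hharmonic hfloor
  simp only [one_div]
  linarith [half_le_log_of_two_le hX]

theorem sum_card_divisors_gcd_div_floor_le {X : ℝ} (hX : 2 ≤ X) :
    ∑ p ∈ Icc 1 ⌊8 * X⌋₊ ×ˢ Icc 1 ⌊8 * X⌋₊,
      ((p.1.gcd p.2).divisors.card : ℝ) * (1 / p.1 * (1 / p.2)) ≤ 72 * Real.log X ^ 2 := by
  calc _ ≤ 2 * (∑ l ∈ Icc 1 ⌊8 * X⌋₊, 1 / (l : ℝ)) ^ 2 := sum_card_divisors_gcd_div_le _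
    _ ≤ 2 * (6 * Real.log X) ^ 2 := by
        gcongr
        exact sum_one_div_Icc_floor_le hX
    _ = 72 * Real.log X ^ 2 := by ring

theorem card_le_sum_of_sum_card_divisors_le {α ι : Type*} {S : Finset α}
    {I : Finset ι} {f : α → ι} {g : α → ℕ × ℕ} {A : ι → Finset ℕ} {B : ι → ℝ}
    (hI : ∀ p ∈ S, f p ∈ I) (hinj : Set.InjOn (fun p => (f p, g p)) S) (hA₀ : ∀ i, 0 ∉ A i)
    (hA : ∀ p ∈ S, (g p).1 * (g p).2 ∈ A (f p)) (hB₀ : ∀ i, 0 ≤ B i)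
    (hB : ∀ p ∈ S, ∑ m ∈ A (f p), (m.divisors.card : ℝ) ≤ B (f p)) :
    (S.card : ℝ) ≤ ∑ i ∈ I, B i := by
  classical
  refine le_trans ?_ (sum_le_sum_of_subset_of_nonneg (image_subset_iff.2 hI) fun i _ _ => hB₀ i)
  rw [card_eq_sum_card_image f S, Nat.cast_sum]
  refine sum_le_sum fun i hi => ?_
  obtain ⟨p, hp, rfl⟩ := mem_image.1 hi
  refine le_trans ?_ (hB p hp)
  have hmaps : Set.MapsTo g (S.filter fun r => f r = f p : Finset α)
      ((A (f p)).biUnion Nat.divisorsAntidiagonal : Finset (ℕ × ℕ)) := by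
    intro r hr
    obtain ⟨hrS, hrp⟩ := mem_filter.1 hr
    have hmem : (g r).1 * (g r).2 ∈ A (f p) := hrp ▸ hA r hrS
    exact mem_biUnion.2 ⟨_, hmem, Nat.mem_divisorsAntidiagonal.2
      ⟨rfl, ne_of_mem_of_not_mem hmem (hA₀ _)⟩⟩
  have hinj' : Set.InjOn g (S.filter fun r => f r = f p : Finset α) := by
    intro r hr s hs hrs
    obtain ⟨hrS, hrp⟩ := mem_filter.1 hr
    obtain ⟨hsS, hsp⟩ := mem_filter.1 hs
    exact hinj hrS hsS (Prod.ext (hrp.trans hsp.symm) hrs)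
  have hcard : (S.filter fun r => f r = f p).card ≤ ∑ m ∈ A (f p), m.divisors.card := by
    refine (card_le_card_of_injOn g hmaps hinj').trans (card_biUnion_le.trans_eq ?_)
    exact sum_congr rfl fun m _ => by rw [← Nat.map_div_right_divisors, card_map]
  exact_mod_cast hcard

theorem zero_notMem_apSet {q u x J : ℕ} : 0 ∉ apSet q u x J :=
  fun h => (pos_of_mem_apSet h).ne' rfl

/-- The quadruples `(a, b, c, d)` of positive integers with `abcd < 4X` and `gcd(abcd, k) = 1` for
which `bd < ac`. The last condition is a normalization: exchanging `a` with `b` and `c` with `d`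
exchanges `ac` with `bd`. -/
structure IsCoprimeQuad (k : ℕ) (X : ℝ) (a b c d : ℕ) : Prop where
  pos : 0 < a ∧ 0 < b ∧ 0 < c ∧ 0 < d
  lt : b * d < a * c
  mul_lt : ((a * c * (b * d) : ℕ) : ℝ) < 4 * X
  coprime : (a * c * (b * d)).Coprime k

namespace IsCoprimeQuad

variable {k a b c d : ℕ} {X : ℝ}

theorem swap (h : IsCoprimeQuad k X a b c d) : IsCoprimeQuad k X c d a b := by
  obtain ⟨⟨ha, hb, hc, hd⟩, hlt, hX, hcop⟩ := h
  refine ⟨⟨hc, hd, ha, hb⟩, ?_, ?_, ?_⟩ <;> rwa [mul_comm c a, mul_comm d b]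

theorem mem_Icc_floor_of_dvd {n : ℕ} (h : IsCoprimeQuad k X a b c d)
    (hn : n ∣ a * c * (b * d)) : n ∈ Icc 1 ⌊8 * X⌋₊ := by
  obtain ⟨ha, hb, hc, hd⟩ := h.pos
  have hpos : 0 < a * c * (b * d) := by positivity
  have hX : ((a * c * (b * d) : ℕ) : ℝ) ≤ 8 * X := by
    have : (0 : ℝ) ≤ (a * c * (b * d) : ℕ) := Nat.cast_nonneg _
    linarith [h.mul_lt]
  exact mem_Icc.2 ⟨Nat.pos_of_dvd_of_pos hn hpos,
    (Nat.le_of_dvd hpos hn).trans (Nat.le_floor hX)⟩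

end IsCoprimeQuad

theorem mem_apSet_ceil_of_mul_lt {k n u v : ℕ} {X : ℝ} (hk : 0 < k) (hn : 0 < n) (hu : 0 < u)
    (huv : u ≡ v [MOD k]) (h : ((u * n : ℕ) : ℝ) < 4 * X) :
    u ∈ apSet k v 0 ⌈4 * X / (n * k)⌉₊ := by
  refine mem_filter.2 ⟨mem_Ioc.2 ⟨hu, ?_⟩, huv⟩
  have hu_le : (u : ℝ) ≤ k * ⌈4 * X / (n * k)⌉₊ := calc
    (u : ℝ) = k * ((u * n : ℕ) / (n * k)) := by
      push_cast
      field_simp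
    _ ≤ k * (4 * X / (n * k)) := by gcongr
    _ ≤ k * ⌈4 * X / (n * k)⌉₊ := by
      gcongr
      exact Nat.le_ceil _
  rw [zero_add]
  exact_mod_cast hu_le

theorem exists_sum_card_divisors_apSet_ceil_le {η : ℝ} (hη : 0 < η) : ∃ C : ℝ, 0 < C ∧
    ∀ (k n v : ℕ) (X : ℝ), 0 < k → 0 < n → 2 ≤ X → v.Coprime k → X ^ η * (n * k) ≤ X →
    ∑ m ∈ apSet k v 0 ⌈4 * X / (n * k)⌉₊, (m.divisors.card : ℝ) ≤
      C * (X / k) * Real.log X / n := by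
  obtain ⟨C, hC, hbound⟩ := exists_sum_card_divisors_apSet_le_log hη
  refine ⟨8 * C, by positivity, fun k n v X hk hn hX hv hnk => ?_⟩
  have hnk0 : (0 : ℝ) < n * k := by positivity
  set T : ℝ := 4 * X / (n * k) with hT
  have hXT : X ^ η ≤ T := by
    rw [hT, le_div_iff₀ hnk0]
    linarith
  have hT1 : 1 ≤ T := (Real.one_le_rpow (by linarith) hη.le).trans hXT
  have hceil : (⌈T⌉₊ : ℝ) ≤ 2 * T := Nat.ceil_le_two_mul (by linarith)
  have hlen : ((0 + k * ⌈T⌉₊ : ℕ) : ℝ) ≤ 64 * X := by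
    rw [zero_add, Nat.cast_mul]
    calc (k * ⌈T⌉₊ : ℝ) ≤ k * (2 * T) := by gcongr
      _ = 8 * X / n := by
        rw [hT]
        field_simp
        norm_num
      _ ≤ 8 * X := div_le_self (by linarith) (by exact_mod_cast hn)
      _ ≤ 64 * X := by linarith
  have hlog : 0 ≤ Real.log X := Real.log_nonneg (by linarith)
  calc _ ≤ C * (v.gcd k).divisors.card * ⌈T⌉₊ * Real.log X :=
        hbound k v 0 ⌈T⌉₊ X hk hX (hXT.trans (Nat.le_ceil T)) hlen
    _ = C * ⌈T⌉₊ * Real.log X := by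
        rw [hv.gcd_eq_one, Nat.divisors_one, card_singleton, Nat.cast_one, mul_one]
    _ ≤ C * (2 * T) * Real.log X := by gcongr
    _ = 8 * C * (X / k) * Real.log X / n := by
        rw [hT]
        field_simp
        ring

theorem exists_card_le_of_modEq_mul {η : ℝ} (hη : 0 < η) : ∃ C : ℝ, 0 < C ∧
    ∀ (k u : ℕ) (X : ℝ) (S : Finset (ℕ × ℕ × ℕ × ℕ)), 0 < k → 2 ≤ X → u.Coprime k →
    (∀ a b c d, (a, b, c, d) ∈ S → IsCoprimeQuad k X a b c d ∧
      X ^ η * ((b * d : ℕ) * k) ≤ X ∧ a * c ≡ u * (b * d) [MOD k]) →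
    (S.card : ℝ) ≤ C * (X / k) * Real.log X ^ 3 := by
  obtain ⟨C, hC, hbound⟩ := exists_sum_card_divisors_apSet_ceil_le hη
  refine ⟨36 * C, by positivity, fun k u X S hk hX hu hS => ?_⟩
  have hlog : 0 ≤ Real.log X := Real.log_nonneg (by linarith)
  have hcard : (S.card : ℝ) ≤ ∑ i ∈ Icc 1 ⌊8 * X⌋₊ ×ˢ Icc 1 ⌊8 * X⌋₊,
      C * (X / k) * Real.log X / (i.1 * i.2 : ℕ) := by
    refine card_le_sum_of_sum_card_divisors_le
      (f := fun p => (p.2.1, p.2.2.2)) (g := fun p => (p.1, p.2.2.1))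
      (A := fun i => apSet k (u * (i.1 * i.2)) 0 ⌈4 * X / ((i.1 * i.2 : ℕ) * k)⌉₊)
      ?_ ?_ (fun _ => zero_notMem_apSet) ?_ (fun _ => by positivity) ?_
    · rintro ⟨a, b, c, d⟩ hp
      have hquad := (hS a b c d hp).1
      exact mem_product.2 ⟨hquad.mem_Icc_floor_of_dvd ((dvd_mul_right b d).mul_left _),
        hquad.mem_Icc_floor_of_dvd ((dvd_mul_left d b).mul_left _)⟩
    · rintro ⟨a, b, c, d⟩ - ⟨a', b', c', d'⟩ - h
      simp only [Prod.mk.injEq] at h ⊢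
      tauto
    · rintro ⟨a, b, c, d⟩ hp
      obtain ⟨⟨⟨ha, hb, hc, hd⟩, -, hX4, -⟩, -, hmod⟩ := hS a b c d hp
      exact mem_apSet_ceil_of_mul_lt hk (Nat.mul_pos hb hd) (Nat.mul_pos ha hc) hmod hX4
    · rintro ⟨a, b, c, d⟩ hp
      obtain ⟨⟨⟨-, hb, -, hd⟩, -, -, hcop⟩, hsmall, -⟩ := hS a b c d hp
      exact hbound k (b * d) _ X hk (Nat.mul_pos hb hd) hX
        (hu.mul_left hcop.coprime_mul_left) hsmall
  calc (S.card : ℝ) ≤ _ := hcard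
    _ = C * (X / k) * Real.log X * (∑ l ∈ Icc 1 ⌊8 * X⌋₊, 1 / (l : ℝ)) ^ 2 := by
        rw [sq, sum_mul_sum, ← sum_product', mul_sum]
        refine sum_congr rfl fun i _ => ?_
        rw [Nat.cast_mul, one_div_mul_one_div, mul_one_div]
    _ ≤ C * (X / k) * Real.log X * (6 * Real.log X) ^ 2 := by
        gcongr
        exact sum_one_div_Icc_floor_le hX
    _ = _ := by ring

theorem mem_apSet_of_eq_add_or_add_eq {b d J m n : ℕ} (hb : 0 < b) (hd : d < J) (hn : 0 < n)
    (h : n = b * d + m ∨ n + b * d = m) : n ∈ apSet b m (m - b * J) (2 * J) := by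
  have hbd : b * d < b * J := Nat.mul_lt_mul_of_pos_left hd hb
  have hmod : n ≡ m [MOD b] := by
    rcases h with rfl | rfl <;> simp [Nat.ModEq]
  refine mem_filter.2 ⟨mem_Ioc.2 ⟨?_, ?_⟩, hmod⟩
  · omega
  · rw [mul_left_comm]
    omega

theorem exists_sum_card_divisors_apSet_two_mul_ceil_le {η : ℝ} (hη : 0 < η) : ∃ C : ℝ, 0 < C ∧
    ∀ (k l b : ℕ) (X : ℝ), 0 < k → 0 < l → 0 < b → 2 ≤ X → k.Coprime b →
    ((k * l : ℕ) : ℝ) ≤ 8 * X → X ^ η ≤ 8 * X / (k * l * b) →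
    ∑ m ∈ apSet b (k * l) (k * l - b * ⌈8 * X / (k * l * b)⌉₊) (2 * ⌈8 * X / (k * l * b)⌉₊),
      (m.divisors.card : ℝ) ≤
        C * (X / k) * Real.log X * ((l.gcd b).divisors.card * (1 / l * (1 / b))) := by
  obtain ⟨C, hC, hbound⟩ := exists_sum_card_divisors_apSet_le_log hη
  refine ⟨32 * C, by positivity, fun k l b X hk hl hb hX hkb hklX hXT => ?_⟩
  set T : ℝ := 8 * X / (k * l * b) with hT
  have hT1 : 1 ≤ T := (Real.one_le_rpow (by linarith) hη.le).trans hXT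
  have hceil : (⌈T⌉₊ : ℝ) ≤ 2 * T := Nat.ceil_le_two_mul (by linarith)
  have hbT : (b : ℝ) * T ≤ 8 * X := calc
    (b : ℝ) * T = 8 * X / (k * l) := by
      rw [hT]
      field_simp
    _ ≤ 8 * X := div_le_self (by linarith) (by exact_mod_cast Nat.mul_pos hk hl)
  have hlen : ((k * l - b * ⌈T⌉₊ + b * (2 * ⌈T⌉₊) : ℕ) : ℝ) ≤ 64 * X := calc
    ((k * l - b * ⌈T⌉₊ + b * (2 * ⌈T⌉₊) : ℕ) : ℝ) ≤ (k * l + b * (2 * ⌈T⌉₊) : ℕ) := by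
      exact_mod_cast Nat.add_le_add_right (Nat.sub_le _ _) _
    _ = (k * l : ℕ) + 2 * (b * ⌈T⌉₊) := by
      push_cast
      ring
    _ ≤ 8 * X + 2 * (b * (2 * T)) := by gcongr
    _ ≤ 64 * X := by linarith
  have hXJ : X ^ η ≤ (2 * ⌈T⌉₊ : ℕ) := by
    push_cast
    linarith [Nat.le_ceil T]
  have hlog : 0 ≤ Real.log X := Real.log_nonneg (by linarith)
  calc _ ≤ C * ((k * l).gcd b).divisors.card * (2 * ⌈T⌉₊ : ℕ) * Real.log X :=
        hbound b (k * l) _ _ X hb hX hXJ hlen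
    _ ≤ C * (l.gcd b).divisors.card * (4 * T) * Real.log X := by
        rw [hkb.gcd_mul_left_cancel l]
        gcongr
        push_cast
        linarith
    _ = _ := by
        rw [hT]
        field_simp
        ring

namespace IsCoprimeQuad

variable {k a b c d l : ℕ} {X : ℝ}

theorem quotient_pos (h : IsCoprimeQuad k X a b c d)
    (hl : a * c = b * d + k * l ∨ a * c + b * d = k * l) : 0 < l := by
  have hlt := h.lt
  rcases Nat.eq_zero_or_pos l with rfl | hl0
  · omega
  · exact hl0

theorem mul_quotient_lt (h : IsCoprimeQuad k X a b c d)
    (hl : a * c = b * d + k * l ∨ a * c + b * d = k * l) :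
    ((k * l * (b * d) : ℕ) : ℝ) < 8 * X := by
  have hlt := h.lt
  have hkl : k * l ≤ 2 * (a * c) := by omega
  calc ((k * l * (b * d) : ℕ) : ℝ) ≤ (2 * (a * c) * (b * d) : ℕ) := by
        exact_mod_cast Nat.mul_le_mul_right _ hkl
    _ = 2 * (a * c * (b * d) : ℕ) := by
        push_cast
        ring
    _ < 8 * X := by linarith [h.mul_lt]

theorem quotient_mem_Icc_floor (hk : 0 < k) (h : IsCoprimeQuad k X a b c d)
    (hl : a * c = b * d + k * l ∨ a * c + b * d = k * l) : l ∈ Icc 1 ⌊8 * X⌋₊ := by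
  obtain ⟨-, hb, -, hd⟩ := h.pos
  have hl_le : l ≤ k * l * (b * d) :=
    (Nat.le_mul_of_pos_left l hk).trans (Nat.le_mul_of_pos_right _ (Nat.mul_pos hb hd))
  exact mem_Icc.2
    ⟨h.quotient_pos hl, hl_le.trans (Nat.le_floor (h.mul_quotient_lt hl).le)⟩

theorem lt_div_quotient (hk : 0 < k) (h : IsCoprimeQuad k X a b c d)
    (hl : a * c = b * d + k * l ∨ a * c + b * d = k * l) : (d : ℝ) < 8 * X / (k * l * b) := by
  have hb := h.pos.2.1
  have hl0 := h.quotient_pos hl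
  have hX := h.mul_quotient_lt hl
  push_cast at hX
  rw [lt_div_iff₀ (by positivity)]
  linarith

theorem eq_add_of_modEq (h : IsCoprimeQuad k X a b c d) (hmod : a * c ≡ b * d [MOD k]) :
    a * c = b * d + k * ((a * c - b * d) / k) := by
  rw [Nat.mul_div_cancel' ((Nat.modEq_iff_dvd' h.lt.le).1 hmod.symm),
    Nat.add_sub_cancel' h.lt.le]

end IsCoprimeQuad

theorem injOn_quotient {k : ℕ} {S : Set (ℕ × ℕ × ℕ × ℕ)} {l : ℕ × ℕ × ℕ × ℕ → ℕ}
    (hb : ∀ p ∈ S, 0 < p.2.1)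
    (hl : (∀ p ∈ S, p.1 * p.2.2.1 = p.2.1 * p.2.2.2 + k * l p) ∨
      ∀ p ∈ S, p.1 * p.2.2.1 + p.2.1 * p.2.2.2 = k * l p) :
    Set.InjOn (fun p => ((l p, p.2.1), p.1, p.2.2.1)) S := by
  rintro ⟨a, b, c, d⟩ hp ⟨a', b', c', d'⟩ hp' h
  simp only [Prod.mk.injEq] at h
  obtain ⟨⟨hll, rfl⟩, rfl, rfl⟩ := h
  have hbd : b * d = b * d' := by
    rcases hl with hl | hl <;>
      have hp_eq := hl _ hp <;> have hp_eq' := hl _ hp' <;> rw [hll] at hp_eq <;>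
      dsimp only at hp_eq hp_eq' <;> omega
  rw [Nat.eq_of_mul_eq_mul_left (hb _ hp) hbd]

theorem exists_card_le_of_quotient {η : ℝ} (hη : 0 < η) : ∃ C : ℝ, 0 < C ∧
    ∀ (k : ℕ) (X : ℝ) (S : Finset (ℕ × ℕ × ℕ × ℕ)) (l : ℕ × ℕ × ℕ × ℕ → ℕ), 0 < k → 2 ≤ X →
    (∀ a b c d, (a, b, c, d) ∈ S → IsCoprimeQuad k X a b c d ∧ X ^ η ≤ d) →
    ((∀ p ∈ S, p.1 * p.2.2.1 = p.2.1 * p.2.2.2 + k * l p) ∨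
      ∀ p ∈ S, p.1 * p.2.2.1 + p.2.1 * p.2.2.2 = k * l p) →
    (S.card : ℝ) ≤ C * (X / k) * Real.log X ^ 3 := by
  obtain ⟨C, hC, hbound⟩ := exists_sum_card_divisors_apSet_two_mul_ceil_le hη
  refine ⟨72 * C, by positivity, fun k X S l hk hX hS hl => ?_⟩
  have hlog : 0 ≤ Real.log X := Real.log_nonneg (by linarith)
  have hinj := injOn_quotient (S := (S : Set (ℕ × ℕ × ℕ × ℕ)))
    (fun ⟨a, b, c, d⟩ hp => (hS a b c d hp).1.pos.2.1) hl
  replace hl : ∀ p ∈ S, p.1 * p.2.2.1 = p.2.1 * p.2.2.2 + k * l p ∨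
      p.1 * p.2.2.1 + p.2.1 * p.2.2.2 = k * l p := fun p hp =>
    hl.imp (fun h => h p hp) fun h => h p hp
  set J : ℕ × ℕ → ℕ := fun i => ⌈8 * X / (k * i.1 * i.2)⌉₊
  set B : ℕ × ℕ → ℝ := fun i =>
    C * (X / k) * Real.log X * ((i.1.gcd i.2).divisors.card * (1 / i.1 * (1 / i.2)))
  have hcard : (S.card : ℝ) ≤ ∑ i ∈ Icc 1 ⌊8 * X⌋₊ ×ˢ Icc 1 ⌊8 * X⌋₊, B i := by
    refine card_le_sum_of_sum_card_divisors_le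
      (A := fun i => apSet i.2 (k * i.1) (k * i.1 - i.2 * J i) (2 * J i))
      ?_ hinj (fun _ => zero_notMem_apSet) ?_ (fun _ => by positivity) ?_
    · rintro ⟨a, b, c, d⟩ hp
      have hquad := (hS a b c d hp).1
      exact mem_product.2 ⟨hquad.quotient_mem_Icc_floor hk (hl _ hp),
        hquad.mem_Icc_floor_of_dvd ((dvd_mul_right b d).mul_left _)⟩
    · rintro ⟨a, b, c, d⟩ hp
      have hquad := (hS a b c d hp).1
      obtain ⟨ha, hb, hc, -⟩ := hquad.pos
      exact mem_apSet_of_eq_add_or_add_eq hb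
        (Nat.lt_ceil.2 (hquad.lt_div_quotient hk (hl _ hp))) (Nat.mul_pos ha hc) (hl _ hp)
    · rintro ⟨a, b, c, d⟩ hp
      obtain ⟨hquad, hd⟩ := hS a b c d hp
      obtain ⟨-, hb, -, hd₀⟩ := hquad.pos
      refine hbound k _ b X hk (hquad.quotient_pos (hl _ hp)) hb hX
        hquad.coprime.coprime_mul_left.coprime_mul_right.symm ?_
        (hd.trans (hquad.lt_div_quotient hk (hl _ hp)).le)
      refine le_trans ?_ (hquad.mul_quotient_lt (hl _ hp)).le
      exact_mod_cast Nat.le_mul_of_pos_right _ (Nat.mul_pos hb hd₀)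
  calc (S.card : ℝ) ≤ _ := hcard
    _ ≤ C * (X / k) * Real.log X * (72 * Real.log X ^ 2) := by
        rw [← mul_sum]
        gcongr
        exact sum_card_divisors_gcd_div_floor_le hX
    _ = _ := by ring

theorem card_le_card_filter_add_card_filter {α : Type*} {S : Finset α} {P Q : α → Prop}
    [DecidablePred P] [DecidablePred Q] (h : ∀ p ∈ S, P p ∨ Q p) :
    (S.card : ℝ) ≤ (S.filter P).card + (S.filter Q).card := by
  classical
  have hunion : S.filter P ∪ S.filter Q = S := by rw [← filter_or, filter_true_of_mem h]
  exact_mod_cast hunion ▸ card_union_le (S.filter P) (S.filter Q)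

theorem exists_card_le_of_rpow_le {η : ℝ} (hη : 0 < η) : ∃ C : ℝ, 0 < C ∧
    ∀ (k : ℕ) (X : ℝ) (S : Finset (ℕ × ℕ × ℕ × ℕ)), 0 < k → 2 ≤ X →
    (∀ a b c d, (a, b, c, d) ∈ S → IsCoprimeQuad k X a b c d ∧ X ^ η ≤ d ∧
      (a * c ≡ b * d [MOD k] ∨ k ∣ a * c + b * d)) →
    (S.card : ℝ) ≤ C * (X / k) * Real.log X ^ 3 := by
  obtain ⟨C, hC, hbound⟩ := exists_card_le_of_quotient hη
  refine ⟨2 * C, by positivity, fun k X S hk hX hS => ?_⟩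
  set S₁ := S.filter fun p => p.1 * p.2.2.1 ≡ p.2.1 * p.2.2.2 [MOD k]
  set S₂ := S.filter fun p => k ∣ p.1 * p.2.2.1 + p.2.1 * p.2.2.2
  have hcard : (S.card : ℝ) ≤ S₁.card + S₂.card :=
    card_le_card_filter_add_card_filter fun ⟨a, b, c, d⟩ hp => (hS a b c d hp).2.2
  have hS₁ : (S₁.card : ℝ) ≤ C * (X / k) * Real.log X ^ 3 := by
    refine hbound k X S₁ (fun p => (p.1 * p.2.2.1 - p.2.1 * p.2.2.2) / k) hk hX
      (fun a b c d hp => (hS a b c d (mem_filter.1 hp).1).imp_right And.left)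
      (Or.inl fun ⟨a, b, c, d⟩ hp => ?_)
    exact (hS a b c d (mem_filter.1 hp).1).1.eq_add_of_modEq (mem_filter.1 hp).2
  have hS₂ : (S₂.card : ℝ) ≤ C * (X / k) * Real.log X ^ 3 :=
    hbound k X S₂ (fun p => (p.1 * p.2.2.1 + p.2.1 * p.2.2.2) / k) hk hX
      (fun a b c d hp => (hS a b c d (mem_filter.1 hp).1).imp_right And.left)
      (Or.inr fun _ hp => (Nat.mul_div_cancel' (mem_filter.1 hp).2).symm)
  linarith

theorem exists_card_le_of_rpow_mul_le {η : ℝ} (hη : 0 < η) : ∃ C : ℝ, 0 < C ∧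
    ∀ (k : ℕ) (X : ℝ) (S : Finset (ℕ × ℕ × ℕ × ℕ)), 0 < k → 2 ≤ X →
    (∀ a b c d, (a, b, c, d) ∈ S → IsCoprimeQuad k X a b c d ∧
      X ^ η * ((b * d : ℕ) * k) ≤ X ∧ (a * c ≡ b * d [MOD k] ∨ k ∣ a * c + b * d)) →
    (S.card : ℝ) ≤ C * (X / k) * Real.log X ^ 3 := by
  obtain ⟨C, hC, hbound⟩ := exists_card_le_of_modEq_mul hη
  refine ⟨2 * C, by positivity, fun k X S hk hX hS => ?_⟩
  set S₁ := S.filter fun p => p.1 * p.2.2.1 ≡ p.2.1 * p.2.2.2 [MOD k]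
  set S₂ := S.filter fun p => k ∣ p.1 * p.2.2.1 + p.2.1 * p.2.2.2
  have hcard : (S.card : ℝ) ≤ S₁.card + S₂.card :=
    card_le_card_filter_add_card_filter fun ⟨a, b, c, d⟩ hp => (hS a b c d hp).2.2
  have hS₁ : (S₁.card : ℝ) ≤ C * (X / k) * Real.log X ^ 3 := by
    refine hbound k 1 X S₁ hk hX (Nat.coprime_one_left k) fun a b c d hp => ?_
    obtain ⟨hpS, hmod⟩ := mem_filter.1 hp
    obtain ⟨hquad, hsmall, -⟩ := hS a b c d hpS
    exact ⟨hquad, hsmall, by rwa [one_mul]⟩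
  have hS₂ : (S₂.card : ℝ) ≤ C * (X / k) * Real.log X ^ 3 := by
    have hcop : (k - 1).Coprime k := by
      simpa only [Nat.sub_add_cancel hk] using (Nat.coprime_self_add_right (m := k - 1)).2
        (Nat.coprime_one_right (k - 1))
    refine hbound k (k - 1) X S₂ hk hX hcop fun a b c d hp => ?_
    obtain ⟨hpS, hdvd⟩ := mem_filter.1 hp
    obtain ⟨hquad, hsmall, -⟩ := hS a b c d hpS
    refine ⟨hquad, hsmall, Nat.ModEq.add_right_cancel' (b * d) ?_⟩
    rw [← Nat.succ_mul, Nat.succ_eq_add_one, Nat.sub_add_cancel hk]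
    exact (Nat.modEq_zero_iff_dvd.2 hdvd).trans
      (Nat.modEq_zero_iff_dvd.2 (dvd_mul_right k _)).symm
  linarith

theorem exists_card_le_of_rpow_le_or {η : ℝ} (hη : 0 < η) : ∃ C : ℝ, 0 < C ∧
    ∀ (k : ℕ) (X : ℝ) (S : Finset (ℕ × ℕ × ℕ × ℕ)), 0 < k → 2 ≤ X →
    (∀ a b c d, (a, b, c, d) ∈ S → IsCoprimeQuad k X a b c d ∧ (X ^ η ≤ b ∨ X ^ η ≤ d) ∧
      (a * c ≡ b * d [MOD k] ∨ k ∣ a * c + b * d)) →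
    (S.card : ℝ) ≤ C * (X / k) * Real.log X ^ 3 := by
  obtain ⟨C, hC, hbound⟩ := exists_card_le_of_rpow_le hη
  refine ⟨2 * C, by positivity, fun k X S hk hX hS => ?_⟩
  set rotate : ℕ × ℕ × ℕ × ℕ → ℕ × ℕ × ℕ × ℕ := fun p => (p.2.2.1, p.2.2.2, p.1, p.2.1)
  have hrotate : rotate.Injective := by
    rintro ⟨a, b, c, d⟩ ⟨a', b', c', d'⟩ h
    simp only [rotate, Prod.mk.injEq] at h ⊢
    tauto
  set S₁ := S.filter fun p => X ^ η ≤ p.2.1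
  set S₂ := S.filter fun p => X ^ η ≤ p.2.2.2
  have hcard : (S.card : ℝ) ≤ S₁.card + S₂.card :=
    card_le_card_filter_add_card_filter fun ⟨a, b, c, d⟩ hp => (hS a b c d hp).2.1
  have hS₁ : (S₁.card : ℝ) ≤ C * (X / k) * Real.log X ^ 3 := by
    rw [← card_image_of_injective S₁ hrotate]
    refine hbound k X _ hk hX fun c d a b hp => ?_
    obtain ⟨⟨a, b, c, d⟩, hq, h⟩ := mem_image.1 hp
    cases h
    obtain ⟨hqS, hb⟩ := mem_filter.1 hq
    obtain ⟨hquad, -, hmod⟩ := hS a b c d hqS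
    exact ⟨hquad.swap, hb, by rwa [mul_comm c a, mul_comm d b]⟩
  have hS₂ : (S₂.card : ℝ) ≤ C * (X / k) * Real.log X ^ 3 := by
    refine hbound k X S₂ hk hX fun a b c d hp => ?_
    obtain ⟨hpS, hd⟩ := mem_filter.1 hp
    obtain ⟨hquad, -, hmod⟩ := hS a b c d hpS
    exact ⟨hquad, hd, hmod⟩
  linarith

theorem exists_card_isCoprimeQuad_modEq_le {θ : ℝ} (hθ : 1 < θ) : ∃ C : ℝ, 0 < C ∧
    ∀ (k : ℕ) (X : ℝ) (S : Finset (ℕ × ℕ × ℕ × ℕ)), 0 < k → 2 ≤ X → (k : ℝ) ^ θ ≤ X →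
    (∀ a b c d, (a, b, c, d) ∈ S → IsCoprimeQuad k X a b c d ∧
      (a * c ≡ b * d [MOD k] ∨ k ∣ a * c + b * d)) →
    (S.card : ℝ) ≤ C * (X / k) * Real.log X ^ 3 := by
  set η : ℝ := (1 - θ⁻¹) / 3 with hη_def
  have hη : 0 < η := by linarith [inv_lt_one_of_one_lt₀ hθ]
  obtain ⟨C₁, hC₁, hsmall⟩ := exists_card_le_of_rpow_mul_le hη
  obtain ⟨C₂, hC₂, hlarge⟩ := exists_card_le_of_rpow_le_or hη
  refine ⟨C₁ + C₂, by positivity, fun k X S hk hX hkX hS => ?_⟩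
  have hX0 : 0 < X := by linarith
  have hk_le : (k : ℝ) ≤ X ^ θ⁻¹ := calc
    (k : ℝ) = ((k : ℝ) ^ θ) ^ θ⁻¹ := (Real.rpow_rpow_inv k.cast_nonneg (by linarith)).symm
    _ ≤ X ^ θ⁻¹ := by gcongr
  set large : ℕ × ℕ × ℕ × ℕ → Prop := fun p => X ^ η ≤ p.2.1 ∨ X ^ η ≤ p.2.2.2
  have hS₁ : ((S.filter fun p => ¬ large p).card : ℝ) ≤ C₁ * (X / k) * Real.log X ^ 3 := by
    refine hsmall k X _ hk hX fun a b c d hp => ?_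
    obtain ⟨hpS, hbd⟩ := mem_filter.1 hp
    obtain ⟨hb, hd⟩ := not_or.1 hbd
    refine ⟨(hS a b c d hpS).1, ?_, (hS a b c d hpS).2⟩
    calc X ^ η * ((b * d : ℕ) * k) ≤ X ^ η * (X ^ η * X ^ η * X ^ θ⁻¹) := by
          rw [Nat.cast_mul]
          gcongr
          exacts [(not_le.1 hb).le, (not_le.1 hd).le]
      _ = X ^ (η + (η + η + θ⁻¹)) := by simp only [Real.rpow_add hX0]
      _ = X := by
          rw [show η + (η + η + θ⁻¹) = 1 by rw [hη_def]; ring, Real.rpow_one]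
  have hS₂ : ((S.filter large).card : ℝ) ≤ C₂ * (X / k) * Real.log X ^ 3 := by
    refine hlarge k X _ hk hX fun a b c d hp => ?_
    obtain ⟨hpS, hbd⟩ := mem_filter.1 hp
    exact ⟨(hS a b c d hpS).1, hbd, (hS a b c d hpS).2⟩
  have hcard : ((S.filter large).card + (S.filter fun p => ¬ large p).card : ℝ) = S.card := by
    exact_mod_cast card_filter_add_card_filter_not large
  linarith

theorem finite_setOf_mul_lt (Y : ℝ) :
    {p : ℕ × ℕ × ℕ × ℕ | 0 < p.1 ∧ 0 < p.2.1 ∧ 0 < p.2.2.1 ∧ 0 < p.2.2.2 ∧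
      (p.1 * p.2.1 * p.2.2.1 * p.2.2.2 : ℝ) < Y}.Finite := by
  set I := Icc 1 ⌊Y⌋₊
  refine (I ×ˢ I ×ˢ I ×ˢ I).finite_toSet.subset ?_
  rintro ⟨a, b, c, d⟩ ⟨ha, hb, hc, hd, hY⟩
  dsimp only at ha hb hc hd hY
  have hmem : ∀ n, n ∣ a * b * c * d → n ∈ I := fun n hn => by
    have hpos : 0 < a * b * c * d := by positivity
    refine mem_Icc.2 ⟨Nat.pos_of_dvd_of_pos hn hpos, (Nat.le_of_dvd hpos hn).trans ?_⟩
    exact Nat.le_floor (by exact_mod_cast hY.le)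
  simp only [coe_product, Set.mem_prod, mem_coe]
  exact ⟨hmem a (((dvd_mul_right a b).mul_right c).mul_right d),
    hmem b (((dvd_mul_left b a).mul_right c).mul_right d),
    hmem c ((dvd_mul_left c _).mul_right d), hmem d (dvd_mul_left d _)⟩

theorem finite_setOf_isCoprimeQuad (k : ℕ) (X : ℝ) :
    {p : ℕ × ℕ × ℕ × ℕ | IsCoprimeQuad k X p.1 p.2.1 p.2.2.1 p.2.2.2}.Finite := by
  refine (finite_setOf_mul_lt (4 * X)).subset fun p ⟨⟨ha, hb, hc, hd⟩, _, hX, _⟩ => ?_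
  refine ⟨ha, hb, hc, hd, lt_of_eq_of_lt ?_ hX⟩
  push_cast
  ring

theorem intCast_modEq_or_modEq_neg_iff {k m n : ℕ} :
    ((m : ℤ) ≡ n [ZMOD k] ∨ (m : ℤ) ≡ -n [ZMOD k]) ↔ (m ≡ n [MOD k] ∨ k ∣ m + n) := by
  rw [Int.natCast_modEq_iff, Int.modEq_comm (b := -(n : ℤ)), Int.modEq_iff_dvd, sub_neg_eq_add,
    ← Nat.cast_add, Int.natCast_dvd_natCast]

theorem count_quadruples_large_general {θ : ℝ} (hθ : 1 < θ) :
    ∃ C : ℝ, ∀ k : ℕ, 0 < k → ∀ X : ℝ, 2 ≤ X → (k : ℝ) ^ θ ≤ X →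
      ({p : ℕ × ℕ × ℕ × ℕ |
          0 < p.1 ∧ 0 < p.2.1 ∧ 0 < p.2.2.1 ∧ 0 < p.2.2.2 ∧
          (p.1 * p.2.1 * p.2.2.1 * p.2.2.2 : ℝ) < 4 * X ∧
          Nat.gcd (p.1 * p.2.1 * p.2.2.1 * p.2.2.2) k = 1 ∧
          ((p.1 * p.2.2.1 : ℤ) ≡ (p.2.1 * p.2.2.2 : ℤ) [ZMOD k] ∨
            (p.1 * p.2.2.1 : ℤ) ≡ -(p.2.1 * p.2.2.2 : ℤ) [ZMOD k]) ∧
          p.1 * p.2.2.1 ≠ p.2.1 * p.2.2.2}.ncard : ℝ) ≤ C * (X / k) * Real.log X ^ 3 := by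
  obtain ⟨C, -, hbound⟩ := exists_card_isCoprimeQuad_modEq_le hθ
  refine ⟨2 * C, fun k hk X hX hkX => ?_⟩
  set S := (finite_setOf_isCoprimeQuad k X).toFinset.filter fun p =>
    p.1 * p.2.2.1 ≡ p.2.1 * p.2.2.2 [MOD k] ∨ k ∣ p.1 * p.2.2.1 + p.2.1 * p.2.2.2 with hS_def
  have hS : ∀ {a b c d}, (a, b, c, d) ∈ S ↔ IsCoprimeQuad k X a b c d ∧
      (a * c ≡ b * d [MOD k] ∨ k ∣ a * c + b * d) := by
    simp [hS_def]
  set swap : ℕ × ℕ × ℕ × ℕ → ℕ × ℕ × ℕ × ℕ := fun p => (p.2.1, p.1, p.2.2.2, p.2.2.1)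
  have hcard : ((S ∪ S.image swap).card : ℝ) ≤ 2 * C * (X / k) * Real.log X ^ 3 := by
    have hle : ((S ∪ S.image swap).card : ℝ) ≤ S.card + S.card := by
      exact_mod_cast (card_union_le _ _).trans (Nat.add_le_add_left card_image_le _)
    linarith [hbound k X S hk hX hkX fun a b c d hp => hS.1 hp]
  refine le_trans ?_ hcard
  rw [← Set.ncard_coe_finset, Nat.cast_le]
  refine Set.ncard_le_ncard ?_ (finite_toSet _)
  rintro ⟨a, b, c, d⟩ ⟨ha, hb, hc, hd, hX4, hgcd, hmod, hne⟩
  dsimp only at ha hb hc hd hX4 hgcd hmod hne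
  norm_cast at hX4
  rw [mul_assoc, mul_mul_mul_comm] at hX4 hgcd
  have hmod' : a * c ≡ b * d [MOD k] ∨ k ∣ a * c + b * d :=
    intCast_modEq_or_modEq_neg_iff.1 (by exact_mod_cast hmod)
  rw [mem_coe, mem_union, mem_image]
  rcases hne.lt_or_gt with hlt | hlt
  · rw [mul_comm] at hX4 hgcd
    have hquad : IsCoprimeQuad k X b a d c := ⟨⟨hb, ha, hd, hc⟩, hlt, by exact_mod_cast hX4, hgcd⟩
    exact Or.inr ⟨(b, a, d, c),
      hS.2 ⟨hquad, hmod'.imp Nat.ModEq.symm (add_comm (a * c) (b * d) ▸ ·)⟩, rfl⟩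
  · exact Or.inl (hS.2 ⟨⟨⟨ha, hb, hc, hd⟩, hlt, by exact_mod_cast hX4, hgcd⟩, hmod'⟩)

end

/-- Lemma 3 (first part): if `Z₁ Z₂ > k^{19/10}` then the number of quadruples
`(a,b,c,d)` with `Z₁ ≤ ab < 2Z₁`, `Z₂ ≤ cd < 2Z₂`, `(abcd,k)=1`, `ac ≡ ±bd (mod k)`,
`ac ≠ bd` is `≪ (Z₁Z₂/k)(log Z₁Z₂)³`. -/
theorem count_quadruples_large :
    ∃ C : ℝ, ∀ k : ℕ, 0 < k → ∀ Z₁ Z₂ : ℝ, 2 ≤ Z₁ → 2 ≤ Z₂ →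
      (k : ℝ) ^ ((19 : ℝ) / 10) < Z₁ * Z₂ →
      ({p : ℕ × ℕ × ℕ × ℕ |
          0 < p.1 ∧ 0 < p.2.1 ∧ 0 < p.2.2.1 ∧ 0 < p.2.2.2 ∧
          Z₁ ≤ (p.1 * p.2.1 : ℝ) ∧ (p.1 * p.2.1 : ℝ) < 2 * Z₁ ∧
          Z₂ ≤ (p.2.2.1 * p.2.2.2 : ℝ) ∧ (p.2.2.1 * p.2.2.2 : ℝ) < 2 * Z₂ ∧
          Nat.gcd (p.1 * p.2.1 * p.2.2.1 * p.2.2.2) k = 1 ∧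
          ((p.1 * p.2.2.1 : ℤ) ≡ (p.2.1 * p.2.2.2 : ℤ) [ZMOD k] ∨
            (p.1 * p.2.2.1 : ℤ) ≡ -(p.2.1 * p.2.2.2 : ℤ) [ZMOD k]) ∧
          p.1 * p.2.2.1 ≠ p.2.1 * p.2.2.2}.ncard : ℝ) ≤
        C * (Z₁ * Z₂ / k) * (Real.log (Z₁ * Z₂)) ^ 3 := by
  obtain ⟨C, hC⟩ := count_quadruples_large_general (θ := 19 / 10) (by norm_num)
  refine ⟨C, fun k hk Z₁ Z₂ hZ₁ hZ₂ hkZ => ?_⟩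
  refine le_trans ?_ (hC k hk (Z₁ * Z₂) (by nlinarith) hkZ.le)
  refine Nat.cast_le.2 (Set.ncard_le_ncard ?_ ?_)
  · rintro ⟨a, b, c, d⟩ ⟨ha, hb, hc, hd, -, hab, -, hcd, h⟩
    refine ⟨ha, hb, hc, hd, ?_, h⟩
    dsimp only at hab hcd ⊢
    calc (a * b * c * d : ℝ) = (a * b) * (c * d) := by ring
      _ < (2 * Z₁) * (2 * Z₂) := by gcongr
      _ = 4 * (Z₁ * Z₂) := by ring
  · exact (finite_setOf_mul_lt (4 * (Z₁ * Z₂))).subset fun p ⟨ha, hb, hc, hd, hX, _⟩ =>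
      ⟨ha, hb, hc, hd, hX⟩
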